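/- Let a ≥ b ≥ 0 be integers with n ≥ a+b, let a_0,…,a_b ∈ K, let Φ = Σ_{t=0}^{b} a_t·Φ_t : Λ^a⊗Λ^b → Λ^a⊗Λ^b, and let 0 ≤ i ≤ b. Then the cokernel of Φ is isomorphic as a G-module to the Schur module L_{(a+i,b−i)} if and only if (1) Σ_{t=0}^{i} a_t·c_t(a,b,i) = 0, and (2) Σ_{t=0}^{j} a_t·c_t(a,b,j) ≠ 0 for every j ∈ {0,…,b} with j ≠ i. -/

import Mathlib

open TensorProduct

set_option synthInstance.maxHeartbeats 1000000
set_option maxSynthPendingDepth 3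
set_option maxHeartbeats 1000000

noncomputable section

namespace MMS

variable (K : Type) [Field K] [CharZero K] (n : ℕ)

/-- `V = K^n`, the natural module of `G = GL(n,K)`. -/
abbrev V : Type := Fin n → K

/-- `Λ^p`, the `p`-th exterior power of `V`. -/
abbrev Lam (p : ℕ) : Type := ⋀[K]^p (V K n)

/-- The wedge `v_1 ∧ ⋯ ∧ v_p ∈ Λ^p`. -/
def wedge {p : ℕ} (v : Fin p → V K n) : Lam K n p :=
  ⟨ExteriorAlgebra.ιMulti K p v, ExteriorAlgebra.ιMulti_range K p (Set.mem_range_self v)⟩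

/-- Transport along an equality of degrees. -/
def ecast {p q : ℕ} (h : p = q) : Lam K n p ≃ₗ[K] Lam K n q :=
  h ▸ LinearEquiv.refl K (Lam K n p)

/-- `m` is the wedge multiplication map `Λ^p ⊗ Λ^q → Λ^{p+q}`. -/
def IsMulMap (p q : ℕ) (m : Lam K n p ⊗[K] Lam K n q →ₗ[K] Lam K n (p+q)) : Prop :=
  ∀ (v : Fin p → V K n) (w : Fin q → V K n),
    m (wedge K n v ⊗ₜ[K] wedge K n w) = wedge K n (Fin.append v w)

/-- The set of `(p,q)`-shuffles: permutations `σ` of `{1, …, p+q}` which are strictly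
increasing on the first `p` and on the last `q` indices. -/
def shuffles (p q : ℕ) : Finset (Equiv.Perm (Fin (p+q))) :=
  Finset.univ.filter (fun σ =>
    (∀ i j : Fin (p+q), i < j → (j : ℕ) < p → σ i < σ j) ∧
    (∀ i j : Fin (p+q), i < j → p ≤ (i : ℕ) → σ i < σ j))

/-- `D` is the component `Δ_{p,q} : Λ^{p+q} → Λ^p ⊗ Λ^q` of the comultiplication, i.e.
`Δ_{p,q}(v_1 ∧ ⋯ ∧ v_{p+q}) = Σ_σ sgn(σ) (v_{σ(1)} ∧ ⋯ ∧ v_{σ(p)}) ⊗ (v_{σ(p+1)} ∧ ⋯ ∧ v_{σ(p+q)})`,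
the sum being over all `(p,q)`-shuffles. -/
def IsComulMap (p q : ℕ) (D : Lam K n (p+q) →ₗ[K] Lam K n p ⊗[K] Lam K n q) : Prop :=
  ∀ v : Fin (p+q) → V K n,
    D (wedge K n v) =
      ∑ σ ∈ shuffles p q,
        (Equiv.Perm.sign σ : ℤ) •
          (wedge K n (fun i => v (σ (Fin.castAdd q i))) ⊗ₜ[K]
            wedge K n (fun i => v (σ (Fin.natAdd p i))))

variable (mf : ∀ p q : ℕ, Lam K n p ⊗[K] Lam K n q →ₗ[K] Lam K n (p+q))
variable (Df : ∀ p q : ℕ, Lam K n (p+q) →ₗ[K] Lam K n p ⊗[K] Lam K n q)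

/-- The map `δ_t = (m ⊗ 1) ∘ (1 ⊗ Δ_{t,b-t}) : Λ^a ⊗ Λ^b → Λ^{a+t} ⊗ Λ^{b-t}`. -/
def deltaMap (a b t : ℕ) (ht : t ≤ b) :
    Lam K n a ⊗[K] Lam K n b →ₗ[K] Lam K n (a+t) ⊗[K] Lam K n (b-t) :=
  (TensorProduct.map (mf a t) LinearMap.id)
    ∘ₗ (TensorProduct.assoc K (Lam K n a) (Lam K n t) (Lam K n (b-t))).symm.toLinearMap
    ∘ₗ (TensorProduct.map LinearMap.id
        ((Df t (b-t)) ∘ₗ (ecast K n (by omega : b = t + (b-t))).toLinearMap))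

/-- The map `θ_t = (1 ⊗ m) ∘ (Δ_{a-t,t} ⊗ 1) : Λ^a ⊗ Λ^b → Λ^{a-t} ⊗ Λ^{b+t}`. -/
def thetaMap (a b t : ℕ) (ht : t ≤ a) :
    Lam K n a ⊗[K] Lam K n b →ₗ[K] Lam K n (a-t) ⊗[K] Lam K n (b+t) :=
  (TensorProduct.map LinearMap.id
      ((ecast K n (by omega : t + b = b + t)).toLinearMap ∘ₗ mf t b))
    ∘ₗ (TensorProduct.assoc K (Lam K n (a-t)) (Lam K n t) (Lam K n b)).toLinearMap
    ∘ₗ (TensorProduct.map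
        ((Df (a-t) t) ∘ₗ (ecast K n (by omega : a = (a-t) + t)).toLinearMap) LinearMap.id)

/-- The map `Φ_t = θ_t ∘ δ_t : Λ^a ⊗ Λ^b → Λ^a ⊗ Λ^b`. -/
def PhiMap (a b t : ℕ) (hta : t ≤ a) (htb : t ≤ b) :
    Lam K n a ⊗[K] Lam K n b →ₗ[K] Lam K n a ⊗[K] Lam K n b :=
  (TensorProduct.congr (ecast K n (by omega : a + t - t = a))
      (ecast K n (by omega : b - t + t = b))).toLinearMap
    ∘ₗ thetaMap K n mf Df (a+t) (b-t) t (by omega)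
    ∘ₗ deltaMap K n mf Df a b t htb

/-- The map `Φ_t`, extended by `0` to all `t`. -/
def PhiMap' (a b t : ℕ) :
    Lam K n a ⊗[K] Lam K n b →ₗ[K] Lam K n a ⊗[K] Lam K n b :=
  if h : t ≤ a ∧ t ≤ b then PhiMap K n mf Df a b t h.1 h.2 else 0

/-- The map `θ_1 : Λ^{a+1} ⊗ Λ^{b-1} → Λ^a ⊗ Λ^b` (for `b ≥ 1`). -/
def theta1 (a b : ℕ) (hb : 1 ≤ b) :
    Lam K n (a+1) ⊗[K] Lam K n (b-1) →ₗ[K] Lam K n a ⊗[K] Lam K n b :=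
  (TensorProduct.congr (ecast K n (by omega : a + 1 - 1 = a))
      (ecast K n (by omega : b - 1 + 1 = b))).toLinearMap
    ∘ₗ thetaMap K n mf Df (a+1) (b-1) 1 (by omega)

/-- The submodule of relations defining the Schur module `L_{(a,b)}`: the image of
`θ_1` if `b ≥ 1`, and `0` if `b = 0`. -/
def schurRel (a b : ℕ) : Submodule K (Lam K n a ⊗[K] Lam K n b) :=
  if hb : 1 ≤ b then LinearMap.range (theta1 K n mf Df a b hb) else ⊥

/-- The Schur module `L_{(a,b)}`, realized as the cokernel of `θ_1` (in characteristic zero). -/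
abbrev SchurL (a b : ℕ) : Type :=
  (Lam K n a ⊗[K] Lam K n b) ⧸ schurRel K n mf Df a b

/-- The projection `π_{(a,b)} : Λ^a ⊗ Λ^b → L_{(a,b)}`. -/
def schurProj (a b : ℕ) : Lam K n a ⊗[K] Lam K n b →ₗ[K] SchurL K n mf Df a b :=
  (schurRel K n mf Df a b).mkQ

/-- The coefficient `c_t(a,b,i) = C(i,t)·C(a-b+t+i,t)`. -/
def cCoef (a b t i : ℕ) : ℕ := (i.choose t) * ((a-b+t+i).choose t)

/-- The group `G = GL(n,K)`. -/
abbrev GLn : Type := Matrix.GeneralLinearGroup (Fin n) K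

/-- `rho` is the family of natural actions of `G = GL(n,K)` on the exterior powers `Λ^p`
of the natural module `V = K^n`. -/
def IsExtAction (rho : ∀ p : ℕ, GLn K n → (Lam K n p →ₗ[K] Lam K n p)) : Prop :=
  ∀ (p : ℕ) (g : GLn K n) (v : Fin p → V K n),
    rho p g (wedge K n v) =
      wedge K n (fun i => Matrix.toLin' (g : Matrix (Fin n) (Fin n) K) (v i))

/-- The action of `g ∈ GL(n,K)` on `Λ^a ⊗ Λ^b`. -/
def rhoT (rho : ∀ p : ℕ, GLn K n → (Lam K n p →ₗ[K] Lam K n p)) (a b : ℕ) (g : GLn K n) :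
    Lam K n a ⊗[K] Lam K n b →ₗ[K] Lam K n a ⊗[K] Lam K n b :=
  TensorProduct.map (rho a g) (rho b g)

/-- The quotients `M₁ ⧸ N₁` and `M₂ ⧸ N₂` are isomorphic as representations, with respect
to the given actions `ρ₁, ρ₂` on `M₁` and `M₂` (which descend to the quotients). -/
def IsQuotIso {G' : Type} {M₁ M₂ : Type} [AddCommGroup M₁] [Module K M₁]
    [AddCommGroup M₂] [Module K M₂]
    (N₁ : Submodule K M₁) (N₂ : Submodule K M₂)
    (ρ₁ : G' → M₁ →ₗ[K] M₁) (ρ₂ : G' → M₂ →ₗ[K] M₂) : Prop :=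
  ∃ e : (M₁ ⧸ N₁) ≃ₗ[K] (M₂ ⧸ N₂),
    ∀ (g : G') (x : M₁) (y : M₂),
      e (Submodule.Quotient.mk x) = Submodule.Quotient.mk y →
      e (Submodule.Quotient.mk (ρ₁ g x)) = Submodule.Quotient.mk (ρ₂ g y)

/-- The "multiply in pairs" map
`(Λ^{p₁} ⊗ Λ^{q₁}) ⊗ (Λ^{p₂} ⊗ Λ^{q₂}) → Λ^{p₁+p₂} ⊗ Λ^{q₁+q₂}`. -/
def pairMul (p₁ q₁ p₂ q₂ : ℕ) :
    (Lam K n p₁ ⊗[K] Lam K n q₁) ⊗[K] (Lam K n p₂ ⊗[K] Lam K n q₂) →ₗ[K]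
      Lam K n (p₁+p₂) ⊗[K] Lam K n (q₁+q₂) :=
  (TensorProduct.map (mf p₁ p₂) (mf q₁ q₂))
    ∘ₗ (TensorProduct.tensorTensorTensorComm K (Lam K n p₁) (Lam K n q₁)
        (Lam K n p₂) (Lam K n q₂)).toLinearMap

/-- The map `φ_k = (m ⊗ m) ∘ (1 ⊗ τ ⊗ 1) ∘ (Δ_{a-k,k} ⊗ Δ_{k,b-k}) : Λ^a ⊗ Λ^b → Λ^a ⊗ Λ^b`. -/
def phiSmall (a b k : ℕ) (hka : k ≤ a) (hkb : k ≤ b) :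
    Lam K n a ⊗[K] Lam K n b →ₗ[K] Lam K n a ⊗[K] Lam K n b :=
  (TensorProduct.congr (ecast K n (by omega : (a-k) + k = a))
      (ecast K n (by omega : k + (b-k) = b))).toLinearMap
    ∘ₗ pairMul K n mf (a-k) k k (b-k)
    ∘ₗ (TensorProduct.map
        ((Df (a-k) k) ∘ₗ (ecast K n (by omega : a = (a-k) + k)).toLinearMap)
        ((Df k (b-k)) ∘ₗ (ecast K n (by omega : b = k + (b-k))).toLinearMap))

/-- The map `ψ_k = C(b,k)·1 - φ_k : Λ^a ⊗ Λ^b → Λ^a ⊗ Λ^b`. -/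
def psiSmall (a b k : ℕ) (hka : k ≤ a) (hkb : k ≤ b) :
    Lam K n a ⊗[K] Lam K n b →ₗ[K] Lam K n a ⊗[K] Lam K n b :=
  (Nat.choose b k : K) • LinearMap.id - phiSmall K n mf Df a b k hka hkb

/-- The map `β_k = (m ⊗ m) ∘ (1 ⊗ τ ⊗ 1) ∘ (Δ_{a-k,k} ⊗ 1 ⊗ 1) : Λ^a ⊗ (Λ^k ⊗ Λ^{b-k}) → Λ^a ⊗ Λ^b`. -/
def betaMap (a b k : ℕ) (hka : k ≤ a) (hkb : k ≤ b) :
    Lam K n a ⊗[K] (Lam K n k ⊗[K] Lam K n (b-k)) →ₗ[K] Lam K n a ⊗[K] Lam K n b :=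
  (TensorProduct.congr (ecast K n (by omega : (a-k) + k = a))
      (ecast K n (by omega : k + (b-k) = b))).toLinearMap
    ∘ₗ pairMul K n mf (a-k) k k (b-k)
    ∘ₗ (TensorProduct.map
        ((Df (a-k) k) ∘ₗ (ecast K n (by omega : a = (a-k) + k)).toLinearMap)
        LinearMap.id)

/-- The map `γ_k : Λ^a ⊗ (Λ^k ⊗ Λ^{b-k}) → Λ^a ⊗ Λ^b`,
`γ_k(x ⊗ y ⊗ z) = x ⊗ (y ∧ z) - β_k(x ⊗ y ⊗ z)`. -/
def gammaMap (a b k : ℕ) (hka : k ≤ a) (hkb : k ≤ b) :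
    Lam K n a ⊗[K] (Lam K n k ⊗[K] Lam K n (b-k)) →ₗ[K] Lam K n a ⊗[K] Lam K n b :=
  (TensorProduct.map LinearMap.id
      ((ecast K n (by omega : k + (b-k) = b)).toLinearMap ∘ₗ mf k (b-k)))
    - betaMap K n mf Df a b k hka hkb

/-- The quantity `d_k(a,b,t)` (for the given `i`), from Lemma 5.3 of the paper. -/
def dInt (a b k i t : ℕ) : ℤ :=
  1 - ∑ j ∈ Finset.Icc (i - min (b-k) i) t,
        (-1:ℤ)^j * ((a-k+j).choose (a-k) : ℤ) * ((b-k+t-i).choose (t-j) : ℤ)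

end MMS

namespace MMS

open ExteriorAlgebra CliffordAlgebra

section Operators

variable (K : Type) [Field K] (n : ℕ)

/-- The exterior algebra of `V = K^n`. -/
abbrev EA : Type := ExteriorAlgebra K (V K n)

/-- The operator `x ⊗ y ↦ ∑ k, (x ∧ e_k) ⊗ (e_k^* ⌋ y)`. -/
def raise : EA K n ⊗[K] EA K n →ₗ[K] EA K n ⊗[K] EA K n :=
  ∑ k : Fin n, TensorProduct.map
    (LinearMap.mulRight K (ExteriorAlgebra.ι K (Pi.single k 1 : V K n)))
    (contractLeft (LinearMap.proj k : V K n →ₗ[K] K))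

/-- The operator `x ⊗ y ↦ ∑ k, (x ⌊ e_k^*) ⊗ (e_k ∧ y)`. -/
def lower : EA K n ⊗[K] EA K n →ₗ[K] EA K n ⊗[K] EA K n :=
  ∑ k : Fin n, TensorProduct.map
    (contractRight.flip (LinearMap.proj k : V K n →ₗ[K] K))
    (LinearMap.mulLeft K (ExteriorAlgebra.ι K (Pi.single k 1 : V K n)))

variable {K n}

theorem raise_tmul (x y : EA K n) : raise K n (x ⊗ₜ y) =
    ∑ k : Fin n, (x * ExteriorAlgebra.ι K (Pi.single k 1 : V K n)) ⊗ₜ[K]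
      (contractLeft (LinearMap.proj k : V K n →ₗ[K] K) y) := by
  simp [raise, LinearMap.sum_apply]

theorem lower_tmul (x y : EA K n) : lower K n (x ⊗ₜ y) =
    ∑ k : Fin n, (contractRight x (LinearMap.proj k : V K n →ₗ[K] K)) ⊗ₜ[K]
      (ExteriorAlgebra.ι K (Pi.single k 1 : V K n) * y) := by
  simp [lower, LinearMap.sum_apply]

theorem raise_mul_left (z x y : EA K n) :
    raise K n ((z * x) ⊗ₜ y) = TensorProduct.map (LinearMap.mulLeft K z) LinearMap.id
      (raise K n (x ⊗ₜ y)) := by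
  simp [raise_tmul, mul_assoc]

theorem lower_mul_right (z x y : EA K n) :
    lower K n (x ⊗ₜ (y * z)) = TensorProduct.map LinearMap.id (LinearMap.mulRight K z)
      (lower K n (x ⊗ₜ y)) := by
  simp [lower_tmul, mul_assoc]

theorem sum_smul_iota (v : V K n) :
    ∑ k : Fin n, v k • ExteriorAlgebra.ι K (Pi.single k 1 : V K n) = ExteriorAlgebra.ι K v := by
  conv_rhs => rw [pi_eq_sum_univ' v]
  simp [map_sum]

theorem contractLeft_iotaMulti (d : Module.Dual K (V K n)) {q : ℕ} (u : Fin (q + 1) → V K n) :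
    contractLeft d (ExteriorAlgebra.ιMulti K (q + 1) u) =
      ∑ j : Fin (q + 1), (-1 : K) ^ (j : ℕ) •
        d (u j) • ExteriorAlgebra.ιMulti K q (fun m => u (j.succAbove m)) := by
  induction q with
  | zero =>
    rw [ExteriorAlgebra.ιMulti_succ_apply, contractLeft_ι_mul]
    simp [contractLeft_one]
  | succ q ih =>
    rw [ExteriorAlgebra.ιMulti_succ_apply, contractLeft_ι_mul, ih,
      Fin.sum_univ_succ (n := q + 1)]
    simp only [Finset.mul_sum, Fin.val_zero, pow_zero, one_smul, Fin.succAbove_zero]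
    rw [sub_eq_add_neg, ← Finset.sum_neg_distrib]
    congr 1
    refine Finset.sum_congr rfl fun j _ => ?_
    rw [ExteriorAlgebra.ιMulti_succ_apply]
    simp only [Fin.succ_succAbove_zero, Matrix.vecTail, Function.comp_def,
      Fin.succ_succAbove_succ, Fin.val_succ, pow_succ, mul_smul_comm]
    simp

theorem raise_tmul_iotaMulti (x : EA K n) {q : ℕ} (u : Fin (q + 1) → V K n) :
    raise K n (x ⊗ₜ ExteriorAlgebra.ιMulti K (q + 1) u) =
      ∑ j : Fin (q + 1), (-1 : K) ^ (j : ℕ) •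
        ((x * ExteriorAlgebra.ι K (u j)) ⊗ₜ[K]
          ExteriorAlgebra.ιMulti K q (fun m => u (j.succAbove m))) := by
  simp only [raise_tmul, contractLeft_iotaMulti, TensorProduct.tmul_sum, TensorProduct.tmul_smul]
  rw [Finset.sum_comm]
  refine Finset.sum_congr rfl fun j _ => ?_
  rw [← Finset.smul_sum, ← sum_smul_iota (u j), Finset.mul_sum, TensorProduct.sum_tmul]
  simp [TensorProduct.smul_tmul']

theorem lower_one_tmul (y : EA K n) : lower K n (1 ⊗ₜ y) = 0 := by
  simp [lower_tmul, contractRight_one]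

/-- The degree operator, on the left. -/
theorem sum_iota_mul_contractLeft {q : ℕ} (y : EA K n) (hy : y ∈ ⋀[K]^q (V K n)) :
    ∑ k : Fin n, ExteriorAlgebra.ι K (Pi.single k 1 : V K n) *
      contractLeft (LinearMap.proj k : V K n →ₗ[K] K) y = (q : K) • y := by
  rw [← ExteriorAlgebra.ιMulti_span_fixedDegree] at hy
  induction hy using Submodule.span_induction with
  | zero => simp
  | add x y _ _ hx hy => simp [mul_add, Finset.sum_add_distrib, hx, hy]
  | smul c x _ hx => simp [← Finset.smul_sum, hx, smul_comm c]
  | mem x hx =>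
    obtain ⟨u, rfl⟩ := hx
    induction q with
    | zero => simp [contractLeft_one]
    | succ q ih =>
      rw [ExteriorAlgebra.ιMulti_succ_apply]
      simp only [contractLeft_ι_mul, mul_sub, Finset.sum_sub_distrib, mul_smul_comm]
      have h1 : ∀ k : Fin n, ExteriorAlgebra.ι K (Pi.single k 1 : V K n) *
          (ExteriorAlgebra.ι K (u 0) * contractLeft (LinearMap.proj k : V K n →ₗ[K] K)
            (ExteriorAlgebra.ιMulti K q (Matrix.vecTail u))) =
          - (ExteriorAlgebra.ι K (u 0) * (ExteriorAlgebra.ι K (Pi.single k 1 : V K n) *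
            contractLeft (LinearMap.proj k : V K n →ₗ[K] K)
            (ExteriorAlgebra.ιMulti K q (Matrix.vecTail u)))) := fun k => by
        rw [← mul_assoc, eq_neg_of_add_eq_zero_left
          (ExteriorAlgebra.ι_add_mul_swap (R := K) (Pi.single k 1 : V K n) (u 0)), neg_mul, mul_assoc]
      simp only [h1, Finset.sum_neg_distrib, ← Finset.mul_sum, ih]
      simp only [LinearMap.proj_apply, ← smul_mul_assoc, ← Finset.sum_mul, sum_smul_iota]
      simp only [mul_smul_comm, Nat.cast_succ, add_smul, one_smul, sub_neg_eq_add]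
      rw [add_comm, add_mul, smul_mul_assoc]

theorem reverse_mem {p : ℕ} {x : EA K n} (hx : x ∈ ⋀[K]^p (V K n)) :
    reverse x ∈ ⋀[K]^p (V K n) := by
  rw [← ExteriorAlgebra.ιMulti_span_fixedDegree] at hx ⊢
  induction hx using Submodule.span_induction with
  | zero => simp
  | add x y _ _ hx hy => simpa using add_mem hx hy
  | smul c x _ hx => simpa using Submodule.smul_mem _ c hx
  | mem x hx =>
    obtain ⟨u, rfl⟩ := hx
    refine Submodule.subset_span ⟨fun i => u i.rev, ?_⟩
    have h := reverse_prod_map_ι (Q := (0 : QuadraticForm K (V K n))) (List.ofFn u)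
    rw [List.map_ofFn] at h
    rw [ExteriorAlgebra.ιMulti_apply, ExteriorAlgebra.ιMulti_apply]
    refine Eq.trans ?_ h.symm
    congr 1
    refine List.ext_getElem (by simp) fun m h₁ h₂ => ?_
    simp [Fin.rev, Nat.sub_sub, add_comm]

/-- The degree operator, on the right. -/
theorem sum_contractRight_mul_iota {p : ℕ} (x : EA K n) (hx : x ∈ ⋀[K]^p (V K n)) :
    ∑ k : Fin n, contractRight x (LinearMap.proj k : V K n →ₗ[K] K) *
      ExteriorAlgebra.ι K (Pi.single k 1 : V K n) = (p : K) • x := by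
  have h := congrArg reverse (sum_iota_mul_contractLeft _ (reverse_mem hx))
  simp only [map_sum, reverse.map_mul, reverse_ι, map_smul, reverse_reverse] at h
  simpa [contractRight_eq] using h

theorem raise_lower_tmul {p q : ℕ} {x y : EA K n} (hx : x ∈ ⋀[K]^p (V K n))
    (hy : y ∈ ⋀[K]^q (V K n)) :
    raise K n (lower K n (x ⊗ₜ y)) =
      lower K n (raise K n (x ⊗ₜ y)) + ((p : K) - q) • (x ⊗ₜ[K] y) := by
  have hk : ∀ k l : Fin n, (LinearMap.proj k : V K n →ₗ[K] K) (Pi.single l 1) =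
      if k = l then 1 else 0 := fun k l => by simp [Pi.single_apply]
  simp only [raise_tmul, lower_tmul, map_sum, contractLeft_ι_mul, contractRight_mul_ι, hk]
  simp only [TensorProduct.tmul_sub, TensorProduct.sub_tmul, Finset.sum_sub_distrib, ite_smul,
    one_smul, zero_smul]
  have h1 : ∑ l : Fin n, ∑ k : Fin n,
      (contractRight x (LinearMap.proj l : V K n →ₗ[K] K) *
        ExteriorAlgebra.ι K (Pi.single k 1 : V K n)) ⊗ₜ[K] (if k = l then y else 0)
      = (p : K) • (x ⊗ₜ[K] y) := by
    rw [TensorProduct.smul_tmul', ← sum_contractRight_mul_iota x hx, TensorProduct.sum_tmul]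
    refine Finset.sum_congr rfl fun l _ => ?_
    rw [Finset.sum_eq_single l] <;> simp +contextual
  have h2 : ∑ l : Fin n, ∑ k : Fin n, (if k = l then x else 0) ⊗ₜ[K]
      (ExteriorAlgebra.ι K (Pi.single k 1 : V K n) *
        contractLeft (LinearMap.proj l : V K n →ₗ[K] K) y)
      = (q : K) • (x ⊗ₜ[K] y) := by
    rw [← TensorProduct.tmul_smul, ← sum_iota_mul_contractLeft y hy, TensorProduct.tmul_sum]
    refine Finset.sum_congr rfl fun l _ => ?_
    rw [Finset.sum_eq_single l] <;> simp +contextual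
  rw [h1, h2, Finset.sum_comm, sub_smul]
  abel

end Operators

end MMS

namespace MMS

open ExteriorAlgebra CliffordAlgebra Equiv

section Shuffles

/-- The block permutation of `Fin (t + s)` given by permutations of the two blocks. -/
def blockPerm {t s : ℕ} (τ : Perm (Fin t)) (τ' : Perm (Fin s)) : Perm (Fin (t + s)) :=
  finSumFinEquiv.permCongr (Perm.sumCongr τ τ')

variable {t s : ℕ}

@[simp] theorem blockPerm_castAdd (τ : Perm (Fin t)) (τ' : Perm (Fin s)) (i : Fin t) :
    blockPerm τ τ' (Fin.castAdd s i) = Fin.castAdd s (τ i) := by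
  simp [blockPerm, Equiv.permCongr_apply]

@[simp] theorem blockPerm_natAdd (τ : Perm (Fin t)) (τ' : Perm (Fin s)) (i : Fin s) :
    blockPerm τ τ' (Fin.natAdd t i) = Fin.natAdd t (τ' i) := by
  simp [blockPerm, Equiv.permCongr_apply]

theorem sign_blockPerm (τ : Perm (Fin t)) (τ' : Perm (Fin s)) :
    Perm.sign (blockPerm τ τ') = Perm.sign τ * Perm.sign τ' := by
  rw [blockPerm, Perm.sign_permCongr, Perm.sign_sumCongr]

theorem blockPerm_mul_inv (τ : Perm (Fin t)) (τ' : Perm (Fin s)) :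
    blockPerm τ τ' * blockPerm τ⁻¹ τ'⁻¹ = 1 := by
  ext i
  refine Fin.addCases (fun i => ?_) (fun i => ?_) i <;> simp

theorem mem_shuffles_iff {σ : Perm (Fin (t + s))} :
    σ ∈ shuffles t s ↔
      StrictMono (fun i => σ (Fin.castAdd s i)) ∧ StrictMono (fun i => σ (Fin.natAdd t i)) := by
  simp only [shuffles, Finset.mem_filter, Finset.mem_univ, true_and]
  constructor
  · rintro ⟨h₁, h₂⟩
    exact ⟨fun i j hij => h₁ _ _ (show (i : ℕ) < j from hij) (by simp),
      fun i j hij => h₂ _ _ (by simpa using hij) (by simp)⟩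
  · rintro ⟨h₁, h₂⟩
    refine ⟨fun i j hij hj => ?_, fun i j hij hi => ?_⟩
    · exact h₁ (show (⟨i, lt_trans hij hj⟩ : Fin t) < ⟨j, hj⟩ from hij)
    · have e : ∀ k : Fin (t + s), (hk : t ≤ (k : ℕ)) →
          Fin.natAdd t (⟨k - t, by omega⟩ : Fin s) = k := fun k hk => by
        ext; simp; omega
      rw [← e i hi, ← e j (hi.trans (Fin.le_iff_val_le_val.1 hij.le))]
      refine h₂ ?_
      rw [Fin.lt_def] at hij ⊢
      simp only
      omega

theorem sum_perm_eq_sum_shuffles {A : Type*} [AddCommMonoid A] (f : Perm (Fin (t + s)) → A)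
    (hf : ∀ σ τ τ', f (σ * blockPerm τ τ') = f σ) :
    ∑ σ, f σ = (t.factorial * s.factorial) • ∑ σ ∈ shuffles t s, f σ := by
  have h : ∑ x ∈ shuffles t s ×ˢ (Finset.univ : Finset (Perm (Fin t) × Perm (Fin s))), f x.1
      = ∑ σ, f σ := by
    refine Finset.sum_bij (fun x _ => x.1 * blockPerm x.2.1 x.2.2) (fun _ _ => Finset.mem_univ _)
      ?_ ?_ (fun x _ => (hf _ _ _).symm)
    · rintro ⟨σ, τ, τ'⟩ hx ⟨ρ, υ, υ'⟩ hy hxy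
      simp only [Finset.mem_product, Finset.mem_univ, and_true, mem_shuffles_iff] at hx hy
      dsimp only at hxy
      have key : τ = υ ∧ τ' = υ' := by
        constructor
        · have := Tuple.unique_monotone (f := fun i => (σ * blockPerm τ τ') (Fin.castAdd s i))
            (σ := τ⁻¹) (τ := υ⁻¹)
            (by simpa [Function.comp_def] using hx.1.monotone)
            (by rw [hxy]; simpa [Function.comp_def] using hy.1.monotone)
          refine inv_injective (Equiv.ext fun i => ?_)
          exact Fin.castAdd_injective _ _ ((σ * blockPerm τ τ').injective (congrFun this i))
        · have := Tuple.unique_monotone (f := fun i => (σ * blockPerm τ τ') (Fin.natAdd t i))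
            (σ := τ'⁻¹) (τ := υ'⁻¹)
            (by simpa [Function.comp_def] using hx.2.monotone)
            (by rw [hxy]; simpa [Function.comp_def] using hy.2.monotone)
          refine inv_injective (Equiv.ext fun i => ?_)
          exact Fin.natAdd_injective _ _ ((σ * blockPerm τ τ').injective (congrFun this i))
      obtain ⟨rfl, rfl⟩ := key
      rw [mul_left_injective _ hxy]
    · intro π _
      let τ := Tuple.sort fun i => π (Fin.castAdd s i)
      let τ' := Tuple.sort fun i => π (Fin.natAdd t i)
      refine ⟨(π * blockPerm τ τ', τ⁻¹, τ'⁻¹), ?_, ?_⟩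
      · simp only [Finset.mem_product, Finset.mem_univ, and_true, mem_shuffles_iff]
        constructor
        · refine Monotone.strictMono_of_injective ?_
            (fun i j hij => Fin.castAdd_injective _ _ (Equiv.injective _ hij))
          simpa [Function.comp_def] using Tuple.monotone_sort fun i => π (Fin.castAdd s i)
        · refine Monotone.strictMono_of_injective ?_
            (fun i j hij => Fin.natAdd_injective _ _ (Equiv.injective _ hij))
          simpa [Function.comp_def] using Tuple.monotone_sort fun i => π (Fin.natAdd t i)
      · simp [mul_assoc, blockPerm_mul_inv]
  rw [← h, Finset.sum_product]
  simp [Finset.card_univ, Fintype.card_perm, Finset.sum_const, ← Finset.smul_sum]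

end Shuffles

section Comultiplication

variable {K : Type} [Field K] {n : ℕ}

/-- The tensor `(v_1 ∧ ⋯ ∧ v_t) ⊗ (v_{t+1} ∧ ⋯ ∧ v_{t+s})`. -/
def splitWedge {b : ℕ} (t s : ℕ) (h : t + s = b) (v : Fin b → V K n) : EA K n ⊗[K] EA K n :=
  ExteriorAlgebra.ιMulti K t (fun i => v (Fin.cast h (Fin.castAdd s i))) ⊗ₜ[K]
    ExteriorAlgebra.ιMulti K s (fun i => v (Fin.cast h (Fin.natAdd t i)))

/-- The signed sum of `splitWedge` over all permutations of the vectors. -/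
def altSplit {b : ℕ} (t s : ℕ) (h : t + s = b) (v : Fin b → V K n) : EA K n ⊗[K] EA K n :=
  ∑ σ : Perm (Fin b), (Perm.sign σ : ℤ) • splitWedge t s h (v ∘ σ)

theorem altSplit_zero {b : ℕ} (v : Fin b → V K n) :
    altSplit 0 b (zero_add b) v =
      (b.factorial : K) • ((1 : EA K n) ⊗ₜ[K] ExteriorAlgebra.ιMulti K b v) := by
  have h : ∀ σ : Perm (Fin b), (Perm.sign σ : ℤ) • splitWedge 0 b (zero_add b) (v ∘ σ) =
      (1 : EA K n) ⊗ₜ[K] ExteriorAlgebra.ιMulti K b v := fun σ => by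
    have e : ∀ i : Fin b, Fin.cast (zero_add b) (Fin.natAdd 0 i) = i := fun i => by ext; simp
    simp only [splitWedge, e, ExteriorAlgebra.ιMulti_zero_apply]
    change (Perm.sign σ : ℤ) • ((1 : EA K n) ⊗ₜ[K] ExteriorAlgebra.ιMulti K b (v ∘ σ)) = _
    rw [AlternatingMap.map_perm]
    rcases Int.units_eq_one_or (Perm.sign σ) with hs | hs <;> simp [hs, TensorProduct.tmul_neg]
  simp only [altSplit, h]
  simp [Finset.card_univ, Fintype.card_perm, Nat.cast_smul_eq_nsmul]

theorem raise_altSplit {b : ℕ} (t s : ℕ) (h : t + (s + 1) = b) (h' : t + 1 + s = b)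
    (v : Fin b → V K n) :
    raise K n (altSplit t (s + 1) h v) = ((s + 1 : ℕ) : K) • altSplit (t + 1) s h' v := by
  subst h
  have hterm : ∀ j : Fin (s + 1), ∑ σ : Perm (Fin (t + (s + 1))),
      (Perm.sign σ : ℤ) • ((-1 : K) ^ (j : ℕ) •
        ((ExteriorAlgebra.ιMulti K t (fun i => v (σ (Fin.castAdd (s + 1) i))) *
          ExteriorAlgebra.ι K (v (σ (Fin.natAdd t j)))) ⊗ₜ[K]
          ExteriorAlgebra.ιMulti K s (fun m => v (σ (Fin.natAdd t (j.succAbove m))))))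
      = altSplit (t + 1) s h' v := by
    intro j
    rw [altSplit]
    refine Fintype.sum_equiv (Equiv.mulRight (blockPerm 1 j.cycleRange.symm)) _ _ fun σ => ?_
    simp only [Equiv.coe_mulRight, splitWedge, Perm.sign_mul, sign_blockPerm, Function.comp_def,
      Perm.sign_one, one_mul, Perm.sign_symm, Fin.sign_cycleRange]
    have e₁ : ExteriorAlgebra.ιMulti K (t + 1) (fun i =>
        v ((σ * blockPerm 1 j.cycleRange.symm : Perm (Fin (t + (s + 1)))) (Fin.cast h' (Fin.castAdd s i)))) =
        ExteriorAlgebra.ιMulti K t (fun i => v (σ (Fin.castAdd (s + 1) i))) *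
          ExteriorAlgebra.ι K (v (σ (Fin.natAdd t j))) := by
      have h1 : ExteriorAlgebra.ι K (v (σ (Fin.natAdd t j))) =
          ExteriorAlgebra.ιMulti K 1 (fun _ => v (σ (Fin.natAdd t j))) := by
        simp [ExteriorAlgebra.ιMulti_succ_apply]
      rw [h1, ExteriorAlgebra.ιMulti_mul_ιMulti]
      congr 1
      funext i
      refine Fin.addCases (fun i => ?_) (fun i => ?_) i
      · rw [Fin.append_left, show Fin.cast h' (Fin.castAdd s (Fin.castAdd 1 i)) =
          Fin.castAdd (s + 1) i from rfl]
        simp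
      · rw [Fin.append_right, show Fin.cast h' (Fin.castAdd s (Fin.natAdd t i)) =
          Fin.natAdd t (0 : Fin (s + 1)) from by ext; simp]
        simp
    have e₂ : (fun i : Fin s =>
        v ((σ * blockPerm 1 j.cycleRange.symm : Perm (Fin (t + (s + 1)))) (Fin.cast h' (Fin.natAdd (t + 1) i)))) =
        fun m => v (σ (Fin.natAdd t (j.succAbove m))) := by
      funext m
      rw [show Fin.cast h' (Fin.natAdd (t + 1) m) = Fin.natAdd t m.succ from by
        ext; simp; omega]
      simp [Fin.cycleRange_symm_succ]
    rw [e₁, e₂]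
    rcases Nat.even_or_odd (j : ℕ) with hj | hj <;> simp [hj.neg_one_pow]
  have hr : raise K n (altSplit t (s + 1) rfl v) = ∑ j : Fin (s + 1),
      ∑ σ : Perm (Fin (t + (s + 1))),
      (Perm.sign σ : ℤ) • ((-1 : K) ^ (j : ℕ) •
        ((ExteriorAlgebra.ιMulti K t (fun i => v (σ (Fin.castAdd (s + 1) i))) *
          ExteriorAlgebra.ι K (v (σ (Fin.natAdd t j)))) ⊗ₜ[K]
          ExteriorAlgebra.ιMulti K s (fun m => v (σ (Fin.natAdd t (j.succAbove m)))))) := by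
    rw [Finset.sum_comm, altSplit, map_sum]
    refine Finset.sum_congr rfl fun σ _ => ?_
    rw [map_zsmul, splitWedge, raise_tmul_iotaMulti, Finset.smul_sum]
    rfl
  rw [hr]
  simp only [hterm]
  rw [Finset.sum_const, Finset.card_univ, Fintype.card_fin, Nat.cast_smul_eq_nsmul]

theorem raise_pow_iotaMulti [CharZero K] {b : ℕ} (t s : ℕ) (h : t + s = b) (v : Fin b → V K n) :
    (s.factorial : K) • (raise K n ^ t) ((1 : EA K n) ⊗ₜ[K] ExteriorAlgebra.ιMulti K b v) =
      altSplit t s h v := by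
  induction t generalizing s with
  | zero =>
    obtain rfl : s = b := by omega
    simp [altSplit_zero]
  | succ t ih =>
    have h1 := congrArg (raise K n) (ih (s + 1) (by omega))
    rw [raise_altSplit t s (by omega) h, map_smul] at h1
    have hs : ((s + 1 : ℕ) : K) ≠ 0 := Nat.cast_ne_zero.2 (Nat.succ_ne_zero s)
    rw [Nat.factorial_succ, Nat.cast_mul, mul_smul] at h1
    rw [pow_succ', Module.End.mul_apply]
    exact smul_right_injective _ hs h1

end Comultiplication

end MMS

namespace MMS

open ExteriorAlgebra CliffordAlgebra Equiv

section Weights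

variable (K : Type) [Field K] (n : ℕ)

/-- The inclusion of `Λ^p ⊗ Λ^q` into the tensor square of the exterior algebra. -/
def incl (p q : ℕ) : Lam K n p ⊗[K] Lam K n q →ₗ[K] EA K n ⊗[K] EA K n :=
  TensorProduct.map (Submodule.subtype _) (Submodule.subtype _)

/-- The image of `Λ^p ⊗ Λ^q` in the tensor square of the exterior algebra. -/
def wt (p q : ℕ) : Submodule K (EA K n ⊗[K] EA K n) := LinearMap.range (incl K n p q)

variable {K n}

@[simp] theorem incl_tmul {p q : ℕ} (x : Lam K n p) (y : Lam K n q) :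
    incl K n p q (x ⊗ₜ y) = (x : EA K n) ⊗ₜ[K] (y : EA K n) := rfl

theorem incl_injective (p q : ℕ) : Function.Injective (incl K n p q) :=
  TensorProduct.map_injective_of_flat_flat _ _ Subtype.val_injective Subtype.val_injective

theorem incl_mem (p q : ℕ) (x : Lam K n p ⊗[K] Lam K n q) : incl K n p q x ∈ wt K n p q :=
  LinearMap.mem_range_self _ x

theorem tmul_mem_wt {p q : ℕ} {x y : EA K n} (hx : x ∈ ⋀[K]^p (V K n))
    (hy : y ∈ ⋀[K]^q (V K n)) : x ⊗ₜ[K] y ∈ wt K n p q :=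
  ⟨⟨x, hx⟩ ⊗ₜ ⟨y, hy⟩, rfl⟩

theorem wt_induction {p q : ℕ} {P : EA K n ⊗[K] EA K n → Prop} (h0 : P 0)
    (hadd : ∀ x y, P x → P y → P (x + y))
    (htmul : ∀ x ∈ ⋀[K]^p (V K n), ∀ y ∈ ⋀[K]^q (V K n), P (x ⊗ₜ y))
    {z : EA K n ⊗[K] EA K n} (hz : z ∈ wt K n p q) : P z := by
  obtain ⟨z, rfl⟩ := hz
  induction z with
  | zero => simpa using h0
  | add x y hx hy => rw [map_add]; exact hadd _ _ hx hy
  | tmul x y => exact htmul _ x.2 _ y.2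

theorem mul_iota_mem {p : ℕ} {x : EA K n} (hx : x ∈ ⋀[K]^p (V K n)) (v : V K n) :
    x * ExteriorAlgebra.ι K v ∈ ⋀[K]^(p + 1) (V K n) := by
  rw [exteriorPower, pow_succ]
  exact Submodule.mul_mem_mul hx (LinearMap.mem_range_self _ v)

theorem iota_mul_mem {p : ℕ} {x : EA K n} (hx : x ∈ ⋀[K]^p (V K n)) (v : V K n) :
    ExteriorAlgebra.ι K v * x ∈ ⋀[K]^(p + 1) (V K n) := by
  rw [exteriorPower, pow_succ']
  exact Submodule.mul_mem_mul (LinearMap.mem_range_self _ v) hx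

theorem contractLeft_mem {q : ℕ} (d : Module.Dual K (V K n)) {y : EA K n}
    (hy : y ∈ ⋀[K]^(q + 1) (V K n)) : contractLeft d y ∈ ⋀[K]^q (V K n) := by
  rw [← ExteriorAlgebra.ιMulti_span_fixedDegree] at hy
  induction hy using Submodule.span_induction with
  | zero => simp
  | add x y _ _ hx hy => rw [map_add]; exact add_mem hx hy
  | smul c x _ hx => rw [map_smul]; exact Submodule.smul_mem _ c hx
  | mem x hx =>
    obtain ⟨u, rfl⟩ := hx
    rw [contractLeft_iotaMulti]
    exact Submodule.sum_mem _ fun j _ => Submodule.smul_mem _ _ <| Submodule.smul_mem _ _ <|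
      ExteriorAlgebra.ιMulti_range K q (Set.mem_range_self _)

theorem contractLeft_eq_zero (d : Module.Dual K (V K n)) {y : EA K n}
    (hy : y ∈ ⋀[K]^0 (V K n)) : contractLeft d y = 0 := by
  rw [exteriorPower, pow_zero] at hy
  obtain ⟨c, rfl⟩ := Submodule.mem_one.1 hy
  exact contractLeft_algebraMap _ d c

theorem contractRight_mem {p : ℕ} (d : Module.Dual K (V K n)) {x : EA K n}
    (hx : x ∈ ⋀[K]^(p + 1) (V K n)) : contractRight x d ∈ ⋀[K]^p (V K n) := by
  rw [contractRight_eq]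
  exact reverse_mem (contractLeft_mem d (reverse_mem hx))

theorem raise_mem {p q : ℕ} {z : EA K n ⊗[K] EA K n} (hz : z ∈ wt K n p (q + 1)) :
    raise K n z ∈ wt K n (p + 1) q := by
  refine wt_induction (P := fun z => raise K n z ∈ wt K n (p + 1) q) (by simp)
    (fun x y hx hy => by rw [map_add]; exact add_mem hx hy) (fun x hx y hy => ?_) hz
  rw [raise_tmul]
  exact Submodule.sum_mem _ fun k _ => tmul_mem_wt (mul_iota_mem hx _) (contractLeft_mem _ hy)

theorem raise_eq_zero {p : ℕ} {z : EA K n ⊗[K] EA K n} (hz : z ∈ wt K n p 0) :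
    raise K n z = 0 := by
  refine wt_induction (P := fun z => raise K n z = 0) (by simp)
    (fun x y hx hy => by rw [map_add, hx, hy, add_zero]) (fun x hx y hy => ?_) hz
  rw [raise_tmul]
  exact Finset.sum_eq_zero fun k _ => by rw [contractLeft_eq_zero _ hy, TensorProduct.tmul_zero]

theorem lower_mem {p q : ℕ} {z : EA K n ⊗[K] EA K n} (hz : z ∈ wt K n (p + 1) q) :
    lower K n z ∈ wt K n p (q + 1) := by
  refine wt_induction (P := fun z => lower K n z ∈ wt K n p (q + 1)) (by simp)
    (fun x y hx hy => by rw [map_add]; exact add_mem hx hy) (fun x hx y hy => ?_) hz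
  rw [lower_tmul]
  exact Submodule.sum_mem _ fun k _ => tmul_mem_wt (contractRight_mem _ hx) (iota_mul_mem hy _)

theorem raise_lower {p q : ℕ} {z : EA K n ⊗[K] EA K n} (hz : z ∈ wt K n p q) :
    raise K n (lower K n z) = lower K n (raise K n z) + ((p : K) - q) • z := by
  refine wt_induction (P := fun z => raise K n (lower K n z) =
    lower K n (raise K n z) + ((p : K) - q) • z) (by simp) (fun x y hx hy => ?_)
    (fun x hx y hy => raise_lower_tmul hx hy) hz
  rw [map_add, map_add, hx, hy, map_add, map_add, smul_add]
  abel

theorem raise_pow_mem {p q : ℕ} (t : ℕ) {z : EA K n ⊗[K] EA K n} (hz : z ∈ wt K n p (q + t)) :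
    (raise K n ^ t) z ∈ wt K n (p + t) q := by
  induction t generalizing q with
  | zero => simpa using hz
  | succ t ih =>
    rw [pow_succ', Module.End.mul_apply]
    exact raise_mem (ih (q := q + 1) (by rwa [add_assoc, add_comm 1 t]))

theorem lower_raise_pow_succ {p q : ℕ} (t : ℕ) {z : EA K n ⊗[K] EA K n}
    (hz : z ∈ wt K n p (q + t)) :
    lower K n ((raise K n ^ (t + 1)) z) = (raise K n ^ t) (lower K n (raise K n z)) -
      (t * ((p : K) - (q + t : ℕ) + t + 1)) • (raise K n ^ t) z := by
  induction t generalizing q with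
  | zero => simp
  | succ t ih =>
    have hz' : z ∈ wt K n p (q + 1 + t) := by rwa [add_assoc, add_comm 1 t]
    have h1 := raise_lower (raise_pow_mem (q := q) (t + 1) hz)
    rw [ih hz', map_sub, map_smul] at h1
    simp only [← Module.End.mul_apply, ← mul_assoc, ← pow_succ'] at h1 ⊢
    simp only [Module.End.mul_apply] at h1 ⊢
    rw [← sub_eq_iff_eq_add] at h1
    rw [← h1, sub_sub, ← add_smul]
    congr 2
    push_cast
    ring

@[simp] theorem coe_wedge {p : ℕ} (v : Fin p → V K n) :
    (wedge K n v : EA K n) = ExteriorAlgebra.ιMulti K p v := rfl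

@[simp] theorem coe_ecast {p q : ℕ} (h : p = q) (x : Lam K n p) :
    (ecast K n h x : EA K n) = x := by
  subst h; rfl

theorem raise_pow_mul_left (t : ℕ) (z x y : EA K n) :
    (raise K n ^ t) ((z * x) ⊗ₜ y) = TensorProduct.map (LinearMap.mulLeft K z) LinearMap.id
      ((raise K n ^ t) (x ⊗ₜ y)) := by
  have h : raise K n ∘ₗ TensorProduct.map (LinearMap.mulLeft K z) LinearMap.id =
      TensorProduct.map (LinearMap.mulLeft K z) LinearMap.id ∘ₗ raise K n :=
    TensorProduct.ext' fun x y => raise_mul_left z x y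
  induction t with
  | zero => simp
  | succ t ih =>
    rw [pow_succ', Module.End.mul_apply, ih]
    exact LinearMap.congr_fun h _

theorem lower_pow_mul_right (t : ℕ) (z x y : EA K n) :
    (lower K n ^ t) (x ⊗ₜ (y * z)) = TensorProduct.map LinearMap.id (LinearMap.mulRight K z)
      ((lower K n ^ t) (x ⊗ₜ y)) := by
  have h : lower K n ∘ₗ TensorProduct.map LinearMap.id (LinearMap.mulRight K z) =
      TensorProduct.map LinearMap.id (LinearMap.mulRight K z) ∘ₗ lower K n :=
    TensorProduct.ext' fun x y => lower_mul_right z x y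
  induction t with
  | zero => simp
  | succ t ih =>
    rw [pow_succ', Module.End.mul_apply, ih]
    exact LinearMap.congr_fun h _

theorem incl_congr_ecast {p q p' q' : ℕ} (hp : p = p') (hq : q = q')
    (x : Lam K n p ⊗[K] Lam K n q) :
    incl K n p' q' (TensorProduct.congr (ecast K n hp) (ecast K n hq) x) = incl K n p q x := by
  induction x with
  | zero => simp
  | add x y hx hy => simp only [map_add, hx, hy]
  | tmul x y => simp

theorem lam_ext {p : ℕ} {A : Type*} [AddCommGroup A] [Module K A] {f g : Lam K n p →ₗ[K] A}
    (h : ∀ v, f (wedge K n v) = g (wedge K n v)) : f = g :=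
  exteriorPower.linearMap_ext (AlternatingMap.ext h)

theorem coe_mul {mf : ∀ p q : ℕ, Lam K n p ⊗[K] Lam K n q →ₗ[K] Lam K n (p+q)}
    [CharZero K] (hmf : ∀ p q, IsMulMap K n p q (mf p q)) {p q : ℕ} (x : Lam K n p)
    (y : Lam K n q) : (mf p q (x ⊗ₜ y) : EA K n) = x * y := by
  have h : (TensorProduct.mk K (Lam K n p) (Lam K n q)).compr₂ (Submodule.subtype _ ∘ₗ mf p q) =
      (LinearMap.mul K (EA K n)).compl₁₂ (Submodule.subtype _) (Submodule.subtype _) := by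
    refine lam_ext fun v => lam_ext fun w => ?_
    simp [hmf p q v w, ExteriorAlgebra.ιMulti_mul_ιMulti]
  exact LinearMap.congr_fun₂ h x y

end Weights

section Structure

variable {K : Type} [Field K] [CharZero K] {n : ℕ}
variable {mf : ∀ p q : ℕ, Lam K n p ⊗[K] Lam K n q →ₗ[K] Lam K n (p+q)}
variable {Df : ∀ p q : ℕ, Lam K n (p+q) →ₗ[K] Lam K n p ⊗[K] Lam K n q}

theorem incl_comul (hDf : ∀ p q, IsComulMap K n p q (Df p q)) {t s : ℕ} (y : Lam K n (t + s)) :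
    (t.factorial : K) • incl K n t s (Df t s y) =
      (raise K n ^ t) ((1 : EA K n) ⊗ₜ[K] (y : EA K n)) := by
  have hs : (s.factorial : K) ≠ 0 := Nat.cast_ne_zero.2 s.factorial_ne_zero
  have h : (t.factorial : K) • (incl K n t s ∘ₗ Df t s) =
      (raise K n ^ t) ∘ₗ (TensorProduct.mk K (EA K n) (EA K n) 1) ∘ₗ Submodule.subtype _ := by
    refine lam_ext fun v => smul_right_injective _ hs ?_
    simp only [LinearMap.smul_apply, LinearMap.comp_apply, Submodule.subtype_apply, coe_wedge,
      TensorProduct.mk_apply]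
    rw [raise_pow_iotaMulti t s rfl v, hDf t s v, altSplit, sum_perm_eq_sum_shuffles, map_sum,
      smul_smul, ← Nat.cast_mul, Nat.cast_smul_eq_nsmul, mul_comm]
    · congr 1
    · intro σ τ τ'
      have e₁ : (fun i => v ((σ * blockPerm τ τ') (Fin.castAdd s i))) =
        (fun i => v (σ (Fin.castAdd s i))) ∘ τ := by funext i; simp
      have e₂ : (fun i => v ((σ * blockPerm τ τ') (Fin.natAdd t i))) =
        (fun i => v (σ (Fin.natAdd t i))) ∘ τ' := by funext i; simp
      simp only [splitWedge, Function.comp_def, Fin.cast_refl, id]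
      erw [e₁, e₂]
      rw [AlternatingMap.map_perm, AlternatingMap.map_perm, Perm.sign_mul, sign_blockPerm]
      rcases Int.units_eq_one_or (Perm.sign τ) with h₁ | h₁ <;>
      rcases Int.units_eq_one_or (Perm.sign τ') with h₂ | h₂ <;>
      simp [h₁, h₂, TensorProduct.tmul_neg, TensorProduct.neg_tmul]
  exact LinearMap.congr_fun h y

theorem raise_pow_one_tmul {b : ℕ} (y : Lam K n b) :
    (raise K n ^ b) ((1 : EA K n) ⊗ₜ[K] (y : EA K n)) =
      (b.factorial : K) • ((y : EA K n) ⊗ₜ[K] (1 : EA K n)) := by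
  have h : (raise K n ^ b) ∘ₗ (TensorProduct.mk K (EA K n) (EA K n) 1) ∘ₗ Submodule.subtype _ =
      (b.factorial : K) • ((TensorProduct.mk K (EA K n) (EA K n)).flip 1 ∘ₗ
        Submodule.subtype (⋀[K]^b (V K n))) := by
    refine lam_ext fun v => ?_
    have h1 := raise_pow_iotaMulti b 0 (add_zero b) v
    have e : ∀ σ : Perm (Fin b), (Perm.sign σ : ℤ) • splitWedge b 0 (add_zero b) (v ∘ σ) =
        ExteriorAlgebra.ιMulti K b v ⊗ₜ[K] (1 : EA K n) := fun σ => by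
      have e : ∀ i : Fin b, Fin.cast (add_zero b) (Fin.castAdd 0 i) = i := fun i => by ext; simp
      simp only [splitWedge, e, ExteriorAlgebra.ιMulti_zero_apply]
      change (Perm.sign σ : ℤ) • (ExteriorAlgebra.ιMulti K b (v ∘ σ) ⊗ₜ[K] (1 : EA K n)) = _
      rw [AlternatingMap.map_perm]
      rcases Int.units_eq_one_or (Perm.sign σ) with h | h <;> simp [h, TensorProduct.neg_tmul]
    simp only [altSplit, e] at h1
    simpa [Finset.card_univ, Fintype.card_perm, Nat.cast_smul_eq_nsmul] using h1
  exact LinearMap.congr_fun h y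

theorem lower_pow_raise_pow_one_tmul {b t s : ℕ} (h : t + s = b) (y : Lam K n b) :
    (t.factorial : K) • (lower K n ^ s) ((raise K n ^ b) ((1 : EA K n) ⊗ₜ[K] (y : EA K n))) =
      ((s.factorial * b.factorial : ℕ) : K) •
        (raise K n ^ t) ((1 : EA K n) ⊗ₜ[K] (y : EA K n)) := by
  induction s generalizing t with
  | zero =>
    obtain rfl : t = b := by omega
    simp
  | succ s ih =>
    have hz : (1 : EA K n) ⊗ₜ[K] (y : EA K n) ∈ wt K n 0 b :=
      tmul_mem_wt (by rw [exteriorPower, pow_zero]; exact Submodule.one_le.1 le_rfl) y.2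
    have h1 := congrArg (lower K n) (ih (t := t + 1) (by omega))
    have h2 := raise_lower hz
    rw [lower_one_tmul, map_zero] at h2
    have h3 := lower_raise_pow_succ (q := s + 1) t (by rwa [add_comm (s + 1), h])
    have h4 : lower K n (raise K n ((1 : EA K n) ⊗ₜ[K] (y : EA K n))) =
        (b : K) • ((1 : EA K n) ⊗ₜ[K] (y : EA K n)) := by
      rw [eq_neg_of_add_eq_zero_left h2.symm, ← neg_smul]
      simp
    rw [h4, map_smul, ← sub_smul] at h3
    rw [map_smul, map_smul, h3, ← Module.End.mul_apply, ← pow_succ'] at h1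
    have ht : ((t + 1 : ℕ) : K) ≠ 0 := Nat.cast_ne_zero.2 (Nat.succ_ne_zero t)
    refine smul_right_injective _ ht ?_
    simp only
    rw [smul_smul, ← Nat.cast_mul, ← Nat.factorial_succ, h1, smul_smul, smul_smul]
    congr 1
    rw [Nat.factorial_succ s, ← h]
    push_cast
    ring

theorem incl_comul_eq_lower (hDf : ∀ p q, IsComulMap K n p q (Df p q)) {t s : ℕ}
    (y : Lam K n (t + s)) :
    (s.factorial : K) • incl K n t s (Df t s y) =
      (lower K n ^ s) ((y : EA K n) ⊗ₜ[K] (1 : EA K n)) := by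
  have h := lower_pow_raise_pow_one_tmul rfl y
  rw [raise_pow_one_tmul, ← incl_comul hDf, map_smul, smul_smul, smul_smul] at h
  have hb : ((t.factorial * (t + s).factorial : ℕ) : K) ≠ 0 :=
    Nat.cast_ne_zero.2 (mul_ne_zero t.factorial_ne_zero (t + s).factorial_ne_zero)
  refine smul_right_injective _ hb ?_
  simp only
  rw [smul_smul, Nat.cast_mul, h]
  congr 1
  push_cast
  ring

theorem incl_deltaMap (hmf : ∀ p q, IsMulMap K n p q (mf p q))
    (hDf : ∀ p q, IsComulMap K n p q (Df p q)) {a b t : ℕ} (ht : t ≤ b)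
    (x : Lam K n a ⊗[K] Lam K n b) :
    (t.factorial : K) • incl K n (a + t) (b - t) (deltaMap K n mf Df a b t ht x) =
      (raise K n ^ t) (incl K n a b x) := by
  induction x with
  | zero => simp
  | add x y hx hy => simp only [map_add, smul_add, hx, hy]
  | tmul x y =>
    have h1 : ∀ w : Lam K n t ⊗[K] Lam K n (b - t), incl K n (a + t) (b - t)
        (TensorProduct.map (mf a t) LinearMap.id ((TensorProduct.assoc K _ _ _).symm (x ⊗ₜ w))) =
        TensorProduct.map (LinearMap.mulLeft K (x : EA K n)) LinearMap.id (incl K n _ _ w) := by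
      intro w
      induction w with
      | zero => simp
      | add w w' hw hw' => simp only [TensorProduct.tmul_add, map_add, hw, hw']
      | tmul w w' => simp [coe_mul hmf]
    have h2 := raise_pow_mul_left t (x : EA K n) 1 (y : EA K n)
    rw [mul_one] at h2
    rw [incl_tmul, h2, deltaMap]
    have h3 := incl_comul hDf (ecast K n (by omega : b = t + (b - t)) y)
    rw [coe_ecast] at h3
    rw [← h3, map_smul, ← h1]
    rfl

theorem incl_thetaMap (hmf : ∀ p q, IsMulMap K n p q (mf p q))
    (hDf : ∀ p q, IsComulMap K n p q (Df p q)) {a b t : ℕ} (ht : t ≤ a)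
    (x : Lam K n a ⊗[K] Lam K n b) :
    (t.factorial : K) • incl K n (a - t) (b + t) (thetaMap K n mf Df a b t ht x) =
      (lower K n ^ t) (incl K n a b x) := by
  induction x with
  | zero => simp
  | add x y hx hy => simp only [map_add, smul_add, hx, hy]
  | tmul x y =>
    have h1 : ∀ w : Lam K n (a - t) ⊗[K] Lam K n t, incl K n (a - t) (b + t)
        (TensorProduct.map LinearMap.id
          ((ecast K n (by omega : t + b = b + t)).toLinearMap ∘ₗ mf t b)
          ((TensorProduct.assoc K _ _ _) (w ⊗ₜ y))) =
        TensorProduct.map LinearMap.id (LinearMap.mulRight K (y : EA K n)) (incl K n _ _ w) := by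
      intro w
      induction w with
      | zero => simp
      | add w w' hw hw' => simp only [TensorProduct.add_tmul, map_add, hw, hw']
      | tmul w w' => simp [coe_mul hmf]
    have h2 := lower_pow_mul_right t (y : EA K n) (x : EA K n) 1
    rw [one_mul] at h2
    rw [incl_tmul, h2, thetaMap]
    have h3 := incl_comul_eq_lower hDf (ecast K n (by omega : a = (a - t) + t) x)
    rw [coe_ecast] at h3
    rw [← h3, map_smul, ← h1]
    rfl

theorem incl_PhiMap (hmf : ∀ p q, IsMulMap K n p q (mf p q))
    (hDf : ∀ p q, IsComulMap K n p q (Df p q)) {a b t : ℕ} (hta : t ≤ a) (htb : t ≤ b)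
    (x : Lam K n a ⊗[K] Lam K n b) :
    ((t.factorial : K) ^ 2) • incl K n a b (PhiMap K n mf Df a b t hta htb x) =
      (lower K n ^ t) ((raise K n ^ t) (incl K n a b x)) := by
  rw [PhiMap, LinearMap.comp_apply, LinearMap.comp_apply, LinearEquiv.coe_coe, incl_congr_ecast,
    pow_two, mul_smul, incl_thetaMap hmf hDf, ← map_smul, incl_deltaMap hmf hDf]

theorem incl_theta1 (hmf : ∀ p q, IsMulMap K n p q (mf p q))
    (hDf : ∀ p q, IsComulMap K n p q (Df p q)) {p q : ℕ} (hq : 1 ≤ q)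
    (x : Lam K n (p + 1) ⊗[K] Lam K n (q - 1)) :
    incl K n p q (theta1 K n mf Df p q hq x) = lower K n (incl K n (p + 1) (q - 1) x) := by
  have h := incl_thetaMap hmf hDf (show 1 ≤ p + 1 by omega) x
  rw [theta1, LinearMap.comp_apply, LinearEquiv.coe_coe, incl_congr_ecast]
  simpa using h

end Structure

end MMS

namespace MMS

open Polynomial

section PolynomialOperators

variable {K : Type} [Field K] {M : Type*} [AddCommGroup M] [Module K M]

theorem aeval_apply_eq_of_eqOn {S T : Module.End K M} {U : Submodule K M}
    (hT : ∀ z ∈ U, T z ∈ U) (hST : ∀ z ∈ U, S z = T z) (p : K[X]) {z : M} (hz : z ∈ U) :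
    aeval S p z = aeval T p z ∧ aeval T p z ∈ U := by
  induction p using Polynomial.induction_on' generalizing z with
  | add p q hp hq =>
    simp only [map_add, LinearMap.add_apply]
    exact ⟨by rw [(hp hz).1, (hq hz).1], add_mem (hp hz).2 (hq hz).2⟩
  | monomial k c =>
    have h : ∀ k : ℕ, (S ^ k) z = (T ^ k) z ∧ (T ^ k) z ∈ U := fun k => by
      induction k with
      | zero => simpa using hz
      | succ k ih =>
        rw [pow_succ', pow_succ', Module.End.mul_apply, Module.End.mul_apply, ih.1]
        exact ⟨hST _ ih.2, hT _ ih.2⟩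
    simp only [aeval_monomial, Module.End.mul_apply, Module.algebraMap_end_apply]
    exact ⟨by rw [(h k).1], Submodule.smul_mem _ c (h k).2⟩

theorem aeval_mem {T : Module.End K M} {U : Submodule K M}
    (hT : ∀ z ∈ U, T z ∈ U) (p : K[X]) {z : M} (hz : z ∈ U) : aeval T p z ∈ U :=
  (aeval_apply_eq_of_eqOn hT (fun _ _ => rfl) p hz).2

theorem map_aeval_apply {N : Type*} [AddCommGroup N] [Module K N] {T : Module.End K M}
    {S : Module.End K N} {f : M →ₗ[K] N} (h : ∀ x, f (T x) = S (f x)) (p : K[X]) (x : M) :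
    f (aeval T p x) = aeval S p (f x) := by
  induction p using Polynomial.induction_on' with
  | add p q hp hq => simp only [map_add, LinearMap.add_apply, hp, hq]
  | monomial k c =>
    have h : ∀ k : ℕ, f ((T ^ k) x) = (S ^ k) (f x) := fun k => by
      induction k with
      | zero => simp
      | succ k ih => rw [pow_succ', pow_succ', Module.End.mul_apply, Module.End.mul_apply, h, ih]
    simp [aeval_monomial, h]

theorem isCoprime_X_sub_C_of_eval_ne_zero {p : K[X]} {c : K} (h : p.eval c ≠ 0) :
    IsCoprime p (X - C c) := by
  refine ((irreducible_X_sub_C c).coprime_iff_not_dvd.2 ?_).symm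
  rwa [dvd_iff_isRoot]

theorem range_aeval_le_of_dvd (T : Module.End K M) {p q : K[X]} (h : p ∣ q) :
    LinearMap.range (aeval T q) ≤ LinearMap.range (aeval T p) := by
  obtain ⟨r, rfl⟩ := h
  rintro _ ⟨x, rfl⟩
  rw [map_mul]
  exact ⟨_, rfl⟩

theorem ker_aeval_le_range_aeval (T : Module.End K M) {p q : K[X]} (h : IsCoprime p q) :
    LinearMap.ker (aeval T p) ≤ LinearMap.range (aeval T q) := by
  obtain ⟨u, v, huv⟩ := h
  intro x hx
  refine ⟨aeval T v x, ?_⟩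
  have h := LinearMap.congr_fun (congrArg (aeval T) huv) x
  rw [map_add, map_mul, map_mul, LinearMap.add_apply, Module.End.mul_apply, LinearMap.mem_ker.1 hx,
    map_zero, zero_add, map_one, ← map_mul, mul_comm, map_mul] at h
  exact h

theorem range_aeval_sup_range_aeval (T : Module.End K M) {p q : K[X]} (h : IsCoprime p q) :
    LinearMap.range (aeval T p) ⊔ LinearMap.range (aeval T q) = ⊤ := by
  obtain ⟨u, v, huv⟩ := h
  refine eq_top_iff.2 fun x _ => ?_
  have h := LinearMap.congr_fun (congrArg (aeval T) huv) x
  rw [mul_comm u, mul_comm v, map_add, map_mul, map_mul, map_one, LinearMap.add_apply] at h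
  rw [← Module.End.one_apply (R := K) x, ← h]
  exact Submodule.add_mem_sup ⟨_, rfl⟩ ⟨_, rfl⟩

theorem range_aeval_eq_of_isRoot (T : Module.End K M) (s : Finset ℕ) (μ : ℕ → K)
    (hT : aeval T (∏ j ∈ s, (X - C (μ j))) = 0) {p : K[X]} {i : ℕ} (hi : i ∈ s)
    (h0 : p.eval (μ i) = 0) (h : ∀ j ∈ s, j ≠ i → p.eval (μ j) ≠ 0) :
    LinearMap.range (aeval T p) = LinearMap.range (aeval T (X - C (μ i))) := by
  refine le_antisymm (range_aeval_le_of_dvd T (dvd_iff_isRoot.2 h0)) ?_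
  have hc : IsCoprime p (∏ j ∈ s.erase i, (X - C (μ j))) :=
    IsCoprime.prod_right fun j hj => isCoprime_X_sub_C_of_eval_ne_zero
      (h j (Finset.mem_of_mem_erase hj) (Finset.ne_of_mem_erase hj))
  rw [← Finset.prod_erase_mul _ _ hi, map_mul] at hT
  rintro _ ⟨x, rfl⟩
  refine ker_aeval_le_range_aeval T hc.symm ?_
  rw [LinearMap.mem_ker, ← Module.End.mul_apply, hT, LinearMap.zero_apply]

end PolynomialOperators

section Eigenvalues

variable (K : Type) [Field K]

/-- The eigenvalues of `lower ∘ raise` on `Λ^a ⊗ Λ^b`. -/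
def eig (a b j : ℕ) : K := j * ((a : K) - b + 1 + j)

variable {K}

theorem eig_eq_natCast {a b : ℕ} (h : b ≤ a) (j : ℕ) :
    eig K a b j = ((j * (a - b + 1 + j) : ℕ) : K) := by
  simp [eig, Nat.cast_sub h]

theorem eig_sub_eig {a b : ℕ} (j s : ℕ) :
    eig K a b j - eig K a b s = ((j : K) - s) * ((a : K) - b + 1 + j + s) := by
  simp only [eig]
  ring

theorem eig_injective [CharZero K] {a b : ℕ} (h : b ≤ a) : Function.Injective (eig K a b) := by
  intro j s hjs
  have h1 := eig_sub_eig (K := K) (a := a) (b := b) j s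
  rw [hjs, sub_self, eq_comm, mul_eq_zero, sub_eq_zero, Nat.cast_inj] at h1
  refine h1.resolve_right fun h2 => ?_
  have h3 : ((a - b + 1 + j + s : ℕ) : K) = 0 := by
    push_cast [Nat.cast_sub h]
    exact h2
  have := Nat.cast_eq_zero.1 h3
  omega

theorem prod_eig_sub_eig {a b : ℕ} (h : b ≤ a) (j t : ℕ) :
    ∏ s ∈ Finset.range t, (eig K a b j - eig K a b s) =
      (t.factorial : K) ^ 2 * (cCoef a b t j : K) := by
  have h2 : ∏ s ∈ Finset.range t, ((a : K) - b + 1 + j + s) =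
      (t.factorial * (a - b + t + j).choose t : ℕ) := by
    rw [show a - b + t + j = a - b + j + t by omega, ← Nat.ascFactorial_eq_factorial_mul_choose]
    induction t with
    | zero => simp
    | succ t ih =>
      rw [Finset.prod_range_succ, ih, Nat.ascFactorial_succ]
      push_cast [Nat.cast_sub h]
      ring
  have h1 : ∏ s ∈ Finset.range t, ((j : K) - s) = (t.factorial * j.choose t : ℕ) := by
    rw [← Nat.descFactorial_eq_factorial_mul_choose]
    clear h2
    induction t with
    | zero => simp
    | succ t ih =>
      rw [Finset.prod_range_succ, ih, Nat.descFactorial_succ]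
      rcases lt_or_ge j t with hjt | hjt
      · simp [Nat.descFactorial_of_lt hjt]
      · rw [Nat.cast_mul, Nat.cast_sub hjt, mul_comm]
  simp only [eig_sub_eig, Finset.prod_mul_distrib, h1, h2, cCoef]
  push_cast
  ring

end Eigenvalues

section Spectrum

variable {K : Type} [Field K] {n : ℕ}

theorem lower_raise_mem {a b : ℕ} {z : EA K n ⊗[K] EA K n} (hz : z ∈ wt K n a b) :
    (lower K n * raise K n) z ∈ wt K n a b := by
  rw [Module.End.mul_apply]
  cases b with
  | zero => simp [raise_eq_zero hz]
  | succ b => exact lower_mem (raise_mem hz)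

theorem raise_lower_eq_add {a b : ℕ} {z : EA K n ⊗[K] EA K n} (hz : z ∈ wt K n a b) :
    (raise K n * lower K n) z =
      (lower K n * raise K n +
        algebraMap K (Module.End K (EA K n ⊗[K] EA K n)) ((a : K) - b)) z :=
  raise_lower hz

theorem aeval_raise_lower {a b : ℕ} (p : K[X]) {z : EA K n ⊗[K] EA K n} (hz : z ∈ wt K n a b) :
    aeval (raise K n * lower K n) p z =
      aeval (lower K n * raise K n) (p.comp (X + C ((a : K) - b))) z := by
  rw [aeval_comp, map_add, aeval_X, aeval_C]
  refine (aeval_apply_eq_of_eqOn (U := wt K n a b) (fun z hz => ?_)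
    (fun z hz => raise_lower_eq_add hz) p hz).1
  exact add_mem (lower_raise_mem hz) (Submodule.smul_mem _ _ hz)

theorem aeval_lower_raise_prod_eig {a b : ℕ} (h : b ≤ a) {z : EA K n ⊗[K] EA K n}
    (hz : z ∈ wt K n a b) :
    aeval (lower K n * raise K n) (∏ j ∈ Finset.range (b + 1), (X - C (eig K a b j))) z = 0 := by
  induction b generalizing a z with
  | zero => simp [raise_eq_zero hz, eig]
  | succ b ih =>
    rw [Finset.prod_range_succ', map_mul,
      Module.End.mul_apply]
    have e0 : aeval (lower K n * raise K n) (X - C (eig K a (b + 1) 0)) z =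
        lower K n (raise K n z) := by simp [eig]
    rw [e0, ← map_aeval_apply (T := raise K n * lower K n) (f := lower K n) (fun _ => rfl),
      aeval_raise_lower _ (raise_mem hz)]
    convert map_zero (lower K n)
    convert ih (a := a + 1) (by omega) (raise_mem hz) using 3
    rw [Polynomial.prod_comp]
    refine Finset.prod_congr rfl fun j _ => ?_
    rw [sub_comp, X_comp, C_comp, add_sub_assoc, ← C_sub, sub_eq_add_neg X, ← C_neg]
    congr 2
    simp only [eig]
    push_cast
    ring

theorem lower_raise_pow_succ_eq_aeval {a b : ℕ} (t : ℕ) (ht : t ≤ b)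
    {z : EA K n ⊗[K] EA K n} (hz : z ∈ wt K n a b) :
    lower K n ((raise K n ^ (t + 1)) z) =
      (raise K n ^ t) (aeval (lower K n * raise K n) (X - C (eig K a b t)) z) := by
  obtain ⟨q, rfl⟩ := Nat.exists_eq_add_of_le' ht
  rw [lower_raise_pow_succ t hz]
  simp only [map_sub, aeval_X, aeval_C, LinearMap.sub_apply, Module.End.mul_apply,
    Module.algebraMap_end_apply, map_smul, eig]
  congr 2
  push_cast
  ring

theorem lower_pow_raise_pow {a b : ℕ} (t : ℕ) (ht : t ≤ b) {z : EA K n ⊗[K] EA K n}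
    (hz : z ∈ wt K n a b) :
    (lower K n ^ t) ((raise K n ^ t) z) =
      aeval (lower K n * raise K n) (∏ s ∈ Finset.range t, (X - C (eig K a b s))) z := by
  induction t generalizing z with
  | zero => simp
  | succ t ih =>
    rw [pow_succ, Module.End.mul_apply, lower_raise_pow_succ_eq_aeval t (by omega) hz,
      ih (by omega) (aeval_mem (fun _ => lower_raise_mem) _ hz), ← Module.End.mul_apply, ← map_mul,
      Finset.prod_range_succ]

/-- On `Λ^(p+1) ⊗ Λ^q` with `q ≤ p`, the operator `raise ∘ lower` has an inverse. -/
theorem exists_inverse_raise_lower [CharZero K] {p q : ℕ} (h : q ≤ p) :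
    ∃ f : K[X], ∀ w ∈ wt K n (p + 1) q,
      aeval (lower K n * raise K n) f (raise K n (lower K n w)) = w := by
  set P : K[X] := ∏ j ∈ Finset.range (q + 1), (X - C (eig K (p + 1) q j)) with hP
  set c : K := ((p + 1 : ℕ) : K) - q with hc
  obtain ⟨Q, hQ⟩ := X_sub_C_dvd_sub_C_eval (a := -c) (p := P)
  have hne : P.eval (-c) ≠ 0 := by
    rw [hP, eval_prod, Finset.prod_ne_zero_iff]
    intro j _ h0
    have h1 : ((p + 1 - q + j * (p + 1 - q + 1 + j) : ℕ) : K) = 0 := by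
      rw [eval_sub, eval_X, eval_C] at h0
      rw [Nat.cast_add, ← eig_eq_natCast (by omega), Nat.cast_sub (by omega), ← hc]
      linear_combination -h0
    have := Nat.cast_eq_zero.1 h1
    omega
  refine ⟨C (-(P.eval (-c))⁻¹) * Q, fun w hw => ?_⟩
  have h1 : raise K n (lower K n w) = aeval (lower K n * raise K n) (X - C (-c)) w := by
    rw [raise_lower hw, map_sub, aeval_X, aeval_C, LinearMap.sub_apply,
      Module.algebraMap_end_apply, neg_smul, sub_neg_eq_add, Module.End.mul_apply]
  have h2 : C (-(P.eval (-c))⁻¹) * Q * (X - C (-c)) = C (-(P.eval (-c))⁻¹) * P + 1 := by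
    rw [mul_assoc, mul_comm Q, ← hQ, mul_sub, ← C_mul, neg_mul, inv_mul_cancel₀ hne]
    simp
  rw [h1, ← Module.End.mul_apply, ← map_mul, h2, map_add, map_mul, LinearMap.add_apply,
    Module.End.mul_apply, aeval_lower_raise_prod_eig (by omega) hw]
  simp

theorem eq_zero_of_lower_eq_zero [CharZero K] {p q : ℕ} (h : q ≤ p) {w : EA K n ⊗[K] EA K n}
    (hw : w ∈ wt K n (p + 1) q) (h0 : raise K n (lower K n w) = 0) : w = 0 := by
  obtain ⟨f, hf⟩ := exists_inverse_raise_lower (K := K) (n := n) h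
  rw [← hf w hw, h0, map_zero]

theorem exists_raise_eq [CharZero K] {p q : ℕ} (h : q ≤ p) {w : EA K n ⊗[K] EA K n}
    (hw : w ∈ wt K n (p + 1) q) : ∃ z ∈ wt K n p (q + 1), raise K n z = w := by
  obtain ⟨f, hf⟩ := exists_inverse_raise_lower (K := K) (n := n) h
  refine ⟨lower K n (aeval (lower K n * raise K n) f w),
    lower_mem (aeval_mem (fun _ => lower_raise_mem) _ hw), ?_⟩
  conv_rhs => rw [← hf w hw, raise_lower hw]
  rw [raise_lower (aeval_mem (fun _ => lower_raise_mem) _ hw), ← Module.End.mul_apply (lower K n),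
    ← Module.End.mul_apply (lower K n)]
  have hX : ∀ z : EA K n ⊗[K] EA K n, (lower K n * raise K n) z = aeval (lower K n * raise K n) (X : K[X]) z := by simp
  rw [hX, hX, ← Module.End.mul_apply, ← map_mul, mul_comm, map_mul, Module.End.mul_apply,
    map_add, map_smul]

theorem exists_raise_pow_eq [CharZero K] {a b t : ℕ} (h : b ≤ a) (ht : t ≤ b)
    {w : EA K n ⊗[K] EA K n} (hw : w ∈ wt K n (a + t) (b - t)) :
    ∃ z ∈ wt K n a b, (raise K n ^ t) z = w := by
  induction t generalizing w with
  | zero => exact ⟨w, hw, by simp⟩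
  | succ t ih =>
    obtain ⟨z, hz, rfl⟩ := exists_raise_eq (p := a + t) (by omega) hw
    obtain ⟨y, hy, rfl⟩ := ih (by omega) (w := z) (by rwa [show b - t = b - (t + 1) + 1 by omega])
    exact ⟨y, hy, by rw [pow_succ', Module.End.mul_apply]⟩

end Spectrum

end MMS

namespace MMS

open Polynomial

section Equivariance

variable {K : Type} [Field K] {n : ℕ}
variable {rho : ∀ p : ℕ, GLn K n → (Lam K n p →ₗ[K] Lam K n p)}

theorem rhoT_tmul {p q : ℕ} (g : GLn K n) (x : Lam K n p) (y : Lam K n q) :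
    rhoT K n rho p q g (x ⊗ₜ y) = rho p g x ⊗ₜ rho q g y := rfl

theorem rho_ecast {p q : ℕ} (h : p = q) (g : GLn K n) (x : Lam K n p) :
    rho q g (ecast K n h x) = ecast K n h (rho p g x) := by
  subst h; rfl

theorem rhoT_congr_ecast {p q p' q' : ℕ} (hp : p = p') (hq : q = q') (g : GLn K n)
    (x : Lam K n p ⊗[K] Lam K n q) :
    rhoT K n rho p' q' g (TensorProduct.congr (ecast K n hp) (ecast K n hq) x) =
      TensorProduct.congr (ecast K n hp) (ecast K n hq) (rhoT K n rho p q g x) := by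
  subst hp hq
  induction x with
  | zero => simp
  | add x y hx hy => simp only [map_add, hx, hy]
  | tmul x y => rfl

variable {mf : ∀ p q : ℕ, Lam K n p ⊗[K] Lam K n q →ₗ[K] Lam K n (p+q)}
variable {Df : ∀ p q : ℕ, Lam K n (p+q) →ₗ[K] Lam K n p ⊗[K] Lam K n q}

theorem rho_mul (hmf : ∀ p q, IsMulMap K n p q (mf p q)) (hrho : IsExtAction K n rho)
    {p q : ℕ} (g : GLn K n) (x : Lam K n p) (y : Lam K n q) :
    rho (p + q) g (mf p q (x ⊗ₜ y)) = mf p q (rho p g x ⊗ₜ rho q g y) := by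
  have h : (TensorProduct.mk K (Lam K n p) (Lam K n q)).compr₂ (rho (p + q) g ∘ₗ mf p q) =
      ((TensorProduct.mk K (Lam K n p) (Lam K n q)).compr₂ (mf p q)).compl₁₂
        (rho p g) (rho q g) := by
    refine lam_ext fun v => lam_ext fun w => ?_
    simp only [LinearMap.compr₂_apply, LinearMap.compl₁₂_apply, TensorProduct.mk_apply,
      LinearMap.comp_apply, hmf p q _ _, hrho _ g _]
    congr 1
    funext i
    refine Fin.addCases (fun i => ?_) (fun i => ?_) i <;> simp
  exact LinearMap.congr_fun₂ h x y

theorem rhoT_comul (hDf : ∀ p q, IsComulMap K n p q (Df p q)) (hrho : IsExtAction K n rho)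
    {p q : ℕ} (g : GLn K n) (x : Lam K n (p + q)) :
    rhoT K n rho p q g (Df p q x) = Df p q (rho (p + q) g x) := by
  have h : rhoT K n rho p q g ∘ₗ Df p q = Df p q ∘ₗ rho (p + q) g := by
    refine lam_ext fun v => ?_
    simp only [LinearMap.comp_apply, hDf p q _, hrho _ g _, map_sum, map_zsmul, rhoT_tmul]
  exact LinearMap.congr_fun h x

theorem rhoT_deltaMap (hmf : ∀ p q, IsMulMap K n p q (mf p q))
    (hDf : ∀ p q, IsComulMap K n p q (Df p q)) (hrho : IsExtAction K n rho)
    {a b t : ℕ} (ht : t ≤ b) (g : GLn K n) (x : Lam K n a ⊗[K] Lam K n b) :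
    rhoT K n rho (a + t) (b - t) g (deltaMap K n mf Df a b t ht x) =
      deltaMap K n mf Df a b t ht (rhoT K n rho a b g x) := by
  induction x with
  | zero => simp
  | add x y hx hy => simp only [map_add, hx, hy]
  | tmul x y =>
    have h1 : ∀ w : Lam K n t ⊗[K] Lam K n (b - t), rhoT K n rho (a + t) (b - t) g
        (TensorProduct.map (mf a t) LinearMap.id ((TensorProduct.assoc K _ _ _).symm (x ⊗ₜ w))) =
        TensorProduct.map (mf a t) LinearMap.id ((TensorProduct.assoc K _ _ _).symm
          (rho a g x ⊗ₜ rhoT K n rho t (b - t) g w)) := by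
      intro w
      induction w with
      | zero => simp
      | add w w' hw hw' => simp only [TensorProduct.tmul_add, map_add, hw, hw']
      | tmul w w' => simp [rhoT_tmul, rho_mul hmf hrho]
    simp only [rhoT_tmul, deltaMap, LinearMap.comp_apply, TensorProduct.map_tmul,
      LinearEquiv.coe_coe, LinearMap.id_apply, h1]
    rw [rhoT_comul hDf hrho, rho_ecast]

theorem rhoT_thetaMap (hmf : ∀ p q, IsMulMap K n p q (mf p q))
    (hDf : ∀ p q, IsComulMap K n p q (Df p q)) (hrho : IsExtAction K n rho)
    {a b t : ℕ} (ht : t ≤ a) (g : GLn K n) (x : Lam K n a ⊗[K] Lam K n b) :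
    rhoT K n rho (a - t) (b + t) g (thetaMap K n mf Df a b t ht x) =
      thetaMap K n mf Df a b t ht (rhoT K n rho a b g x) := by
  induction x with
  | zero => simp
  | add x y hx hy => simp only [map_add, hx, hy]
  | tmul x y =>
    have h1 : ∀ w : Lam K n (a - t) ⊗[K] Lam K n t, rhoT K n rho (a - t) (b + t) g
        (TensorProduct.map LinearMap.id
          ((ecast K n (by omega : t + b = b + t)).toLinearMap ∘ₗ mf t b)
          ((TensorProduct.assoc K _ _ _) (w ⊗ₜ y))) =
        TensorProduct.map LinearMap.id
          ((ecast K n (by omega : t + b = b + t)).toLinearMap ∘ₗ mf t b)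
          ((TensorProduct.assoc K _ _ _) (rhoT K n rho (a - t) t g w ⊗ₜ rho b g y)) := by
      intro w
      induction w with
      | zero => simp
      | add w w' hw hw' => simp only [TensorProduct.add_tmul, map_add, hw, hw']
      | tmul w w' => simp [rhoT_tmul, rho_ecast, rho_mul hmf hrho]
    simp only [rhoT_tmul, thetaMap, LinearMap.comp_apply, TensorProduct.map_tmul,
      LinearEquiv.coe_coe, LinearMap.id_apply, h1]
    rw [rhoT_comul hDf hrho, rho_ecast]

theorem rhoT_mem_schurRel (hmf : ∀ p q, IsMulMap K n p q (mf p q))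
    (hDf : ∀ p q, IsComulMap K n p q (Df p q)) (hrho : IsExtAction K n rho)
    {p q : ℕ} (g : GLn K n) {x : Lam K n p ⊗[K] Lam K n q}
    (hx : x ∈ schurRel K n mf Df p q) : rhoT K n rho p q g x ∈ schurRel K n mf Df p q := by
  rw [schurRel] at hx ⊢
  split_ifs at hx ⊢ with hq
  · obtain ⟨y, rfl⟩ := hx
    refine ⟨rhoT K n rho (p + 1) (q - 1) g y, ?_⟩
    simp only [theta1, LinearMap.comp_apply, LinearEquiv.coe_coe]
    rw [← rhoT_thetaMap hmf hDf hrho, rhoT_congr_ecast]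
  · rw [Submodule.mem_bot] at hx ⊢
    rw [hx, map_zero]

end Equivariance

section QuotIso

variable {K : Type} [Field K] {G' M₁ M₂ : Type} [AddCommGroup M₁] [Module K M₁]
  [AddCommGroup M₂] [Module K M₂]
  {N₁ : Submodule K M₁} {N₂ : Submodule K M₂}
  {ρ₁ : G' → M₁ →ₗ[K] M₁} {ρ₂ : G' → M₂ →ₗ[K] M₂}

theorem IsQuotIso.of_surjective (f : M₁ →ₗ[K] M₂)
    (hf : ∀ y, ∃ x, f x = y) (hker : ∀ x, f x ∈ N₂ ↔ x ∈ N₁)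
    (hρ : ∀ g x, f (ρ₁ g x) = ρ₂ g (f x)) (hN : ∀ g, ∀ y ∈ N₂, ρ₂ g y ∈ N₂) :
    IsQuotIso K N₁ N₂ ρ₁ ρ₂ := by
  have hk : N₁ = LinearMap.ker (N₂.mkQ ∘ₗ f) := by
    ext x
    simp [hker]
  have hs : Function.Surjective (N₂.mkQ ∘ₗ f) := N₂.mkQ_surjective.comp hf
  refine ⟨(Submodule.quotEquivOfEq _ _ hk).trans
    ((N₂.mkQ ∘ₗ f).quotKerEquivOfSurjective hs), fun g x y h => ?_⟩
  have h1 : ∀ x, (Submodule.quotEquivOfEq _ _ hk).trans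
    ((N₂.mkQ ∘ₗ f).quotKerEquivOfSurjective hs) (Submodule.Quotient.mk x) =
      Submodule.Quotient.mk (f x) := fun x => rfl
  rw [h1, Submodule.Quotient.eq] at h ⊢
  rw [hρ, ← map_sub]
  exact hN g _ h

theorem IsQuotIso.symm (h : IsQuotIso K N₁ N₂ ρ₁ ρ₂) : IsQuotIso K N₂ N₁ ρ₂ ρ₁ := by
  obtain ⟨e, he⟩ := h
  refine ⟨e.symm, fun g x y h => ?_⟩
  rw [LinearEquiv.symm_apply_eq] at h ⊢
  exact (he g y x h.symm).symm

theorem IsQuotIso.range_aeval_le (h : IsQuotIso K N₁ N₂ ρ₁ ρ₂) (g : G') (p : K[X])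
    (hp : LinearMap.range (aeval (R := K) (ρ₁ g) p) ≤ N₁) :
    LinearMap.range (aeval (R := K) (ρ₂ g) p) ≤ N₂ := by
  obtain ⟨e, he⟩ := h
  have h1 : ∀ x y, e (Submodule.Quotient.mk x) = Submodule.Quotient.mk y →
      e (Submodule.Quotient.mk (aeval (R := K) (ρ₁ g) p x)) =
        Submodule.Quotient.mk (aeval (R := K) (ρ₂ g) p y) := by
    intro x y hxy
    clear hp
    induction p using Polynomial.induction_on' with
    | add p q hp hq => simp only [map_add, LinearMap.add_apply, Submodule.Quotient.mk_add, hp, hq]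
    | monomial k c =>
      have hk : e (Submodule.Quotient.mk ((ρ₁ g ^ k) x)) =
          Submodule.Quotient.mk ((ρ₂ g ^ k) y) := by
        induction k with
        | zero => simpa using hxy
        | succ k ih =>
          rw [pow_succ', pow_succ', Module.End.mul_apply, Module.End.mul_apply]
          exact he g _ _ ih
      simp [aeval_monomial, hk]
  rintro _ ⟨y, rfl⟩
  obtain ⟨x, hx⟩ := N₁.mkQ_surjective (e.symm (Submodule.Quotient.mk y))
  have h2 := h1 x y (by rw [← Submodule.mkQ_apply, hx, LinearEquiv.apply_symm_apply])
  rw [(Submodule.Quotient.mk_eq_zero N₁).2 (hp ⟨x, rfl⟩), map_zero, eq_comm,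
    Submodule.Quotient.mk_eq_zero] at h2
  exact h2

theorem IsQuotIso.finrank_eq (h : IsQuotIso K N₁ N₂ ρ₁ ρ₂) :
    Module.finrank K (M₁ ⧸ N₁) = Module.finrank K (M₂ ⧸ N₂) :=
  h.choose.finrank_eq

end QuotIso

section Delta

variable {K : Type} [Field K] [CharZero K] {n : ℕ}
variable {mf : ∀ p q : ℕ, Lam K n p ⊗[K] Lam K n q →ₗ[K] Lam K n (p+q)}
variable {Df : ∀ p q : ℕ, Lam K n (p+q) →ₗ[K] Lam K n p ⊗[K] Lam K n q}

theorem incl_PhiMap'_one (hmf : ∀ p q, IsMulMap K n p q (mf p q))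
    (hDf : ∀ p q, IsComulMap K n p q (Df p q)) {a b : ℕ} (hba : b ≤ a)
    (x : Lam K n a ⊗[K] Lam K n b) :
    incl K n a b (PhiMap' K n mf Df a b 1 x) = (lower K n * raise K n) (incl K n a b x) := by
  rw [PhiMap', Module.End.mul_apply]
  split_ifs with h
  · simpa using incl_PhiMap hmf hDf h.1 h.2 x
  · obtain rfl : b = 0 := by omega
    rw [raise_eq_zero (incl_mem _ _ x), LinearMap.zero_apply, map_zero, map_zero]

theorem incl_aeval (hmf : ∀ p q, IsMulMap K n p q (mf p q))
    (hDf : ∀ p q, IsComulMap K n p q (Df p q)) {a b : ℕ} (hba : b ≤ a) (p : K[X])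
    (x : Lam K n a ⊗[K] Lam K n b) :
    incl K n a b (aeval (R := K) (PhiMap' K n mf Df a b 1) p x) =
      aeval (lower K n * raise K n) p (incl K n a b x) :=
  map_aeval_apply (incl_PhiMap'_one hmf hDf hba) p x

theorem aeval_PhiMap'_one_prod_eig (hmf : ∀ p q, IsMulMap K n p q (mf p q))
    (hDf : ∀ p q, IsComulMap K n p q (Df p q)) {a b : ℕ} (hba : b ≤ a) :
    aeval (R := K) (PhiMap' K n mf Df a b 1)
      (∏ j ∈ Finset.range (b + 1), (X - C (eig K a b j))) = 0 := by
  refine LinearMap.ext fun x => incl_injective a b ?_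
  rw [incl_aeval hmf hDf hba, aeval_lower_raise_prod_eig hba (incl_mem _ _ x)]
  simp

theorem aeval_PhiMap'_one_prod_eig_eq_smul (hmf : ∀ p q, IsMulMap K n p q (mf p q))
    (hDf : ∀ p q, IsComulMap K n p q (Df p q)) {a b t : ℕ} (hba : b ≤ a) (ht : t ≤ b) :
    aeval (R := K) (PhiMap' K n mf Df a b 1) (∏ s ∈ Finset.range t, (X - C (eig K a b s))) =
      (t.factorial : K) ^ 2 • PhiMap' K n mf Df a b t := by
  refine LinearMap.ext fun x => incl_injective a b ?_
  rw [incl_aeval hmf hDf hba, ← lower_pow_raise_pow t ht (incl_mem _ _ x), PhiMap',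
    dif_pos ⟨ht.trans hba, ht⟩, LinearMap.smul_apply, map_smul, incl_PhiMap hmf hDf]

/-- The polynomial in `Φ_1` whose value is `∑ a_t Φ_t`. -/
def phiPoly (K : Type) [Field K] (coef : ℕ → K) (a b : ℕ) : K[X] :=
  ∑ t ∈ Finset.range (b + 1), C (coef t * ((t.factorial : K) ^ 2)⁻¹) *
    ∏ s ∈ Finset.range t, (X - C (eig K a b s))

theorem aeval_phiPoly (hmf : ∀ p q, IsMulMap K n p q (mf p q))
    (hDf : ∀ p q, IsComulMap K n p q (Df p q)) {a b : ℕ} (hba : b ≤ a) (coef : ℕ → K) :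
    aeval (R := K) (PhiMap' K n mf Df a b 1) (phiPoly K coef a b) =
      ∑ t ∈ Finset.range (b + 1), coef t • PhiMap' K n mf Df a b t := by
  rw [phiPoly, map_sum]
  refine Finset.sum_congr rfl fun t ht => ?_
  have h : ((t.factorial : K) ^ 2) ≠ 0 := pow_ne_zero 2 (Nat.cast_ne_zero.2 t.factorial_ne_zero)
  rw [map_mul, aeval_PhiMap'_one_prod_eig_eq_smul hmf hDf hba
    (Nat.lt_succ_iff.1 (Finset.mem_range.1 ht)), aeval_C, ← Algebra.smul_def, smul_smul,
    mul_assoc, inv_mul_cancel₀ h, mul_one]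

theorem eval_phiPoly {a b j : ℕ} (hba : b ≤ a) (hj : j ≤ b) (coef : ℕ → K) :
    (phiPoly K coef a b).eval (eig K a b j) =
      ∑ t ∈ Finset.range (j + 1), coef t * (cCoef a b t j : K) := by
  have h1 : (phiPoly K coef a b).eval (eig K a b j) =
      ∑ t ∈ Finset.range (b + 1), coef t * (cCoef a b t j : K) := by
    rw [phiPoly, eval_finsetSum]
    refine Finset.sum_congr rfl fun t _ => ?_
    have h : ((t.factorial : K) ^ 2) ≠ 0 :=
      pow_ne_zero 2 (Nat.cast_ne_zero.2 t.factorial_ne_zero)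
    simp only [eval_mul, eval_C, eval_prod, eval_sub, eval_X]
    rw [prod_eig_sub_eig hba]
    rw [mul_assoc, inv_mul_cancel_left₀ h]
  rw [h1]
  refine (Finset.sum_subset (Finset.range_subset_range.2 (by omega)) fun t _ ht => ?_).symm
  rw [Finset.mem_range, not_lt] at ht
  simp [cCoef, Nat.choose_eq_zero_of_lt (show j < t by omega)]

theorem mem_schurRel_iff (hmf : ∀ p q, IsMulMap K n p q (mf p q))
    (hDf : ∀ p q, IsComulMap K n p q (Df p q)) {p q : ℕ} (hqp : q ≤ p)
    {x : Lam K n p ⊗[K] Lam K n q} : x ∈ schurRel K n mf Df p q ↔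
      ∃ y ∈ wt K n p q, lower K n (raise K n y) = incl K n p q x := by
  rw [schurRel]
  split_ifs with hq
  · obtain ⟨q, rfl⟩ := Nat.exists_eq_add_of_le' hq
    constructor
    · rintro ⟨z, rfl⟩
      obtain ⟨y, hy, h⟩ := exists_raise_eq (show q ≤ p by omega) (incl_mem (p + 1) q z)
      exact ⟨y, hy, by rw [h, incl_theta1 hmf hDf]; rfl⟩
    · rintro ⟨y, hy, h⟩
      obtain ⟨z, hz⟩ := raise_mem hy
      refine ⟨z, incl_injective _ _ ?_⟩
      rw [incl_theta1 hmf hDf, ← h, ← hz]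
      rfl
  · obtain rfl : q = 0 := by omega
    constructor
    · intro h
      exact ⟨0, zero_mem _, by rw [(Submodule.mem_bot K).1 h]; simp⟩
    · rintro ⟨y, hy, h⟩
      rw [raise_eq_zero hy, map_zero] at h
      exact incl_injective _ _ (h.symm.trans (map_zero _).symm)

theorem deltaMap_surjective (hmf : ∀ p q, IsMulMap K n p q (mf p q))
    (hDf : ∀ p q, IsComulMap K n p q (Df p q)) {a b i : ℕ} (hba : b ≤ a) (hi : i ≤ b)
    (y : Lam K n (a + i) ⊗[K] Lam K n (b - i)) : ∃ x, deltaMap K n mf Df a b i hi x = y := by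
  obtain ⟨_, ⟨x, rfl⟩, h⟩ := exists_raise_pow_eq hba hi (incl_mem _ _ y)
  have hne : (i.factorial : K) ≠ 0 := Nat.cast_ne_zero.2 i.factorial_ne_zero
  refine ⟨(i.factorial : K) • x, incl_injective _ _ (smul_right_injective _ hne ?_)⟩
  simp only
  rw [incl_deltaMap hmf hDf, map_smul, map_smul, h]

theorem deltaMap_mem_schurRel_iff (hmf : ∀ p q, IsMulMap K n p q (mf p q))
    (hDf : ∀ p q, IsComulMap K n p q (Df p q)) {a b i : ℕ} (hba : b ≤ a) (hi : i ≤ b)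
    (x : Lam K n a ⊗[K] Lam K n b) :
    deltaMap K n mf Df a b i hi x ∈ schurRel K n mf Df (a + i) (b - i) ↔
      x ∈ LinearMap.range (aeval (R := K) (PhiMap' K n mf Df a b 1) (X - C (eig K a b i))) := by
  have hne : (i.factorial : K) ≠ 0 := Nat.cast_ne_zero.2 i.factorial_ne_zero
  have hE : ∀ z : Lam K n a ⊗[K] Lam K n b,
      lower K n (raise K n ((raise K n ^ i) (incl K n a b z))) = (raise K n ^ i) (incl K n a b
        (aeval (R := K) (PhiMap' K n mf Df a b 1) (X - C (eig K a b i)) z)) := fun z => by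
    rw [incl_aeval hmf hDf hba, ← lower_raise_pow_succ_eq_aeval i hi (incl_mem _ _ z), pow_succ',
      Module.End.mul_apply]
  rw [mem_schurRel_iff hmf hDf (by omega)]
  constructor
  · rintro ⟨y, hy, h⟩
    obtain ⟨_, ⟨z, rfl⟩, rfl⟩ := exists_raise_pow_eq hba hi hy
    rw [hE] at h
    have h1 := congrArg (fun w => (i.factorial : K) • w) h
    simp only [incl_deltaMap hmf hDf] at h1
    rw [← map_smul, ← sub_eq_zero, ← map_sub, ← map_smul, ← map_sub, ← map_smul] at h1
    have h2 := congrArg (lower K n ^ i) h1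
    rw [lower_pow_raise_pow i hi (incl_mem _ _ _), ← incl_aeval hmf hDf hba, map_zero] at h2
    have h3 := incl_injective a b (h2.trans (map_zero _).symm)
    have h4 := ker_aeval_le_range_aeval _ (q := X - C (eig K a b i))
      (IsCoprime.prod_left fun s hs => (isCoprime_X_sub_C_of_eval_ne_zero (by
        rw [eval_sub, eval_X, eval_C, sub_ne_zero]
        exact (eig_injective hba).ne (Finset.mem_range.1 hs).ne'))) (LinearMap.mem_ker.2 h3)
    have h5 := sub_mem (LinearMap.mem_range_self _ ((i.factorial : K) • z)) h4
    simpa using h5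
  · rintro ⟨z, rfl⟩
    refine ⟨(raise K n ^ i) (incl K n a b ((i.factorial : K)⁻¹ • z)), ?_, ?_⟩
    · exact raise_pow_mem i (by rw [Nat.sub_add_cancel hi]; exact incl_mem _ _ _)
    · rw [hE]
      refine smul_right_injective _ hne ?_
      simp only
      rw [incl_deltaMap hmf hDf, map_smul, map_smul, map_smul, smul_smul, mul_inv_cancel₀ hne,
        one_smul]

/-- The cokernel of `Φ_1 - μ_i` is the Schur module `L_{(a+i,b-i)}`. -/
theorem isQuotIso_range_sub_eig (hmf : ∀ p q, IsMulMap K n p q (mf p q))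
    (hDf : ∀ p q, IsComulMap K n p q (Df p q))
    {rho : ∀ p : ℕ, GLn K n → (Lam K n p →ₗ[K] Lam K n p)} (hrho : IsExtAction K n rho)
    {a b i : ℕ} (hba : b ≤ a) (hi : i ≤ b) :
    IsQuotIso K
      (LinearMap.range (aeval (R := K) (PhiMap' K n mf Df a b 1) (X - C (eig K a b i))))
      (schurRel K n mf Df (a + i) (b - i)) (rhoT K n rho a b) (rhoT K n rho (a + i) (b - i)) :=
  IsQuotIso.of_surjective (deltaMap K n mf Df a b i hi) (deltaMap_surjective hmf hDf hba hi)
    (deltaMap_mem_schurRel_iff hmf hDf hba hi)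
    (fun g x => (rhoT_deltaMap hmf hDf hrho hi g x).symm)
    (fun g _ => rhoT_mem_schurRel hmf hDf hrho g)

end Delta

end MMS

namespace MMS

open Polynomial

section Torus

variable {K : Type} [Field K] {n : ℕ}

theorem tmul_ne_zero {A B : Type*} [AddCommGroup A] [Module K A] [AddCommGroup B] [Module K B]
    {x : A} {y : B} (hx : x ≠ 0) (hy : y ≠ 0) : x ⊗ₜ[K] y ≠ 0 := by
  obtain ⟨f, hf⟩ := Module.Projective.exists_dual_ne_zero K hx
  obtain ⟨g, hg⟩ := Module.Projective.exists_dual_ne_zero K hy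
  intro h
  have h1 := congrArg (TensorProduct.lid K K ∘ TensorProduct.map f g) h
  simp only [Function.comp_apply, TensorProduct.map_tmul, TensorProduct.lid_tmul, map_zero,
    smul_eq_mul] at h1
  exact mul_ne_zero hf hg h1

/-- The wedge of the standard basis vectors with indices `f 0, …, f (p - 1)`. -/
def basisWedge (K : Type) [Field K] {n p : ℕ} (f : Fin p → Fin n) : Lam K n p :=
  wedge K n (fun j => Pi.single (f j) 1)

theorem basisWedge_castLE_ne_zero {p : ℕ} (hp : p ≤ n) :
    basisWedge K (Fin.castLE hp) ≠ 0 := by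
  have h := (exteriorPower.ιMulti_family_linearIndependent_ofBasis K p
    (Pi.basisFun K (Fin n))).ne_zero (Set.powersetCard.ofFinEmbEquiv (Fin.castLEOrderEmb hp))
  rw [exteriorPower.ιMulti_family, Equiv.symm_apply_apply] at h
  convert h using 1
  refine Subtype.ext ?_
  rw [exteriorPower.ιMulti_apply_coe]
  simp only [basisWedge, coe_wedge]
  congr 1
  funext j
  simp

theorem lam_ext_basisWedge {p : ℕ} {A : Type*} [AddCommGroup A] [Module K A]
    {f g : Lam K n p →ₗ[K] A}
    (h : ∀ v : Fin p → Fin n, Function.Injective v → f (basisWedge K v) = g (basisWedge K v)) :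
    f = g := by
  refine exteriorPower.linearMap_ext ((Pi.basisFun K (Fin n)).ext_alternating fun v hv => ?_)
  have h1 := h v hv
  simp only [basisWedge] at h1
  simp only [LinearMap.compAlternatingMap_apply, Pi.basisFun_apply]
  exact h1

theorem tensor_ext_basisWedge {p q : ℕ} {A : Type*} [AddCommGroup A] [Module K A]
    {f g : Lam K n p ⊗[K] Lam K n q →ₗ[K] A}
    (h : ∀ (v : Fin p → Fin n) (w : Fin q → Fin n), Function.Injective v → Function.Injective w →
      f (basisWedge K v ⊗ₜ basisWedge K w) = g (basisWedge K v ⊗ₜ basisWedge K w)) : f = g :=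
  TensorProduct.ext <| lam_ext_basisWedge fun v hv => lam_ext_basisWedge fun w hw => h v w hv hw

theorem aeval_apply_of_eq_smul {M : Type*} [AddCommGroup M] [Module K M] {T : Module.End K M}
    {x : M} {c : K} (h : T x = c • x) (p : K[X]) : aeval T p x = p.eval c • x := by
  have h1 := map_aeval_apply (T := algebraMap K (Module.End K K) c) (S := T)
    (f := LinearMap.toSpanSingleton K M x) (fun k => by simp [h, smul_smul, mul_comm])
    p 1
  rw [aeval_algebraMap_apply] at h1
  simpa using h1.symm

theorem raise_basisWedge_castLE {p q : ℕ} (hq : q ≤ p) (hp : p ≤ n) :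
    raise K n (incl K n p q
      (basisWedge K (Fin.castLE hp) ⊗ₜ basisWedge K (Fin.castLE (hq.trans hp)))) = 0 := by
  cases q with
  | zero => exact raise_eq_zero (incl_mem _ _ _)
  | succ q =>
    rw [incl_tmul, basisWedge, basisWedge, coe_wedge, coe_wedge, raise_tmul_iotaMulti]
    refine Finset.sum_eq_zero fun j _ => ?_
    have h : ExteriorAlgebra.ι K (Pi.single (Fin.castLE (hq.trans hp) j) 1 : V K n) =
        ExteriorAlgebra.ιMulti K 1 fun _ : Fin 1 =>
          (Pi.single (Fin.castLE (hq.trans hp) j) 1 : V K n) := by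
      simp [ExteriorAlgebra.ιMulti_apply]
    rw [h, ExteriorAlgebra.ιMulti_mul_ιMulti, AlternatingMap.map_eq_zero_of_eq _ _
      (i := Fin.castAdd 1 (Fin.castLE hq j)) (j := Fin.natAdd p 0) _ _,
      TensorProduct.zero_tmul, smul_zero]
    · rw [Fin.append_left, Fin.append_right]
      rfl
    · intro h
      have := congrArg Fin.val h
      simp only [Fin.val_castAdd, Fin.val_castLE, Fin.val_natAdd] at this
      omega

variable (K n) in
/-- The diagonal matrix with the first `r` entries equal to `1` and the others equal to `2`. -/
def torusElt [CharZero K] (r : ℕ) : GLn K n :=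
  Matrix.GeneralLinearGroup.mkOfDetNeZero
    (Matrix.diagonal fun k : Fin n => if (k : ℕ) < r then (1 : K) else 2) (by
      rw [Matrix.det_diagonal, Finset.prod_ne_zero_iff]
      intro k _
      split_ifs
      · exact one_ne_zero
      · exact two_ne_zero)

variable [CharZero K] {rho : ∀ p : ℕ, GLn K n → (Lam K n p →ₗ[K] Lam K n p)}

theorem rho_torusElt (hrho : IsExtAction K n rho) (r : ℕ) {p : ℕ} (v : Fin p → Fin n) :
    rho p (torusElt K n r) (basisWedge K v) =
      (2 : K) ^ (Finset.univ.filter fun j => r ≤ (v j : ℕ)).card • basisWedge K v := by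
  have h1 : ∀ j, Matrix.toLin' (torusElt K n r : Matrix (Fin n) (Fin n) K)
      (Pi.single (v j) 1 : V K n) =
      (if r ≤ (v j : ℕ) then (2 : K) else 1) • (Pi.single (v j) 1 : V K n) := by
    intro j
    have e : (torusElt K n r : Matrix (Fin n) (Fin n) K) =
      Matrix.diagonal fun k : Fin n => if (k : ℕ) < r then (1 : K) else 2 := rfl
    rw [e, Matrix.toLin'_apply]
    funext k
    rw [Matrix.mulVec_diagonal]
    rcases eq_or_ne k (v j) with rfl | hk
    · by_cases hr : r ≤ (v j : ℕ)
      · simp [hr, not_lt.2 hr]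
      · simp [hr, not_le.1 hr]
    · simp [Pi.single_eq_of_ne hk]
  rw [basisWedge, hrho]
  simp only [h1]
  refine Subtype.ext ?_
  rw [coe_wedge, Submodule.coe_smul, coe_wedge, AlternatingMap.map_smul_univ, Finset.prod_ite]
  simp

theorem rhoT_torusElt (hrho : IsExtAction K n rho) (r : ℕ) {p q : ℕ} (v : Fin p → Fin n)
    (w : Fin q → Fin n) :
    rhoT K n rho p q (torusElt K n r) (basisWedge K v ⊗ₜ basisWedge K w) =
      (2 : K) ^ ((Finset.univ.filter fun j => r ≤ (v j : ℕ)).card +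
        (Finset.univ.filter fun j => r ≤ (w j : ℕ)).card) •
        (basisWedge K v ⊗ₜ[K] basisWedge K w) := by
  rw [rhoT_tmul, rho_torusElt hrho, rho_torusElt hrho, TensorProduct.smul_tmul_smul, pow_add]

variable (K) in
/-- The polynomial with roots `2, 4, …, 2 ^ N`. -/
def torusPoly (N : ℕ) : K[X] := ∏ s ∈ Finset.Icc 1 N, (X - C ((2 : K) ^ s))

theorem aeval_torusPoly_eq_zero (hrho : IsExtAction K n rho) {r p q : ℕ} (hr : r < p) :
    aeval (R := K) (rhoT K n rho p q (torusElt K n r)) (torusPoly K (p + q)) = 0 := by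
  refine tensor_ext_basisWedge fun v w hv _ => ?_
  rw [aeval_apply_of_eq_smul (rhoT_torusElt hrho r v w), torusPoly, eval_prod,
    Finset.prod_eq_zero (i := (Finset.univ.filter fun j => r ≤ (v j : ℕ)).card +
        (Finset.univ.filter fun j => r ≤ (w j : ℕ)).card) _ (by simp)]
  · simp
  · rw [Finset.mem_Icc]
    constructor
    · by_contra h
      have h0 : (Finset.univ.filter fun j => r ≤ (v j : ℕ)).card = 0 := by omega
      rw [Finset.card_eq_zero, Finset.filter_eq_empty_iff] at h0
      have := Fintype.card_le_of_injective (fun j => (⟨v j, not_le.1 (h0 (Finset.mem_univ j))⟩ :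
        Fin r)) fun j k hjk => hv (Fin.ext (Fin.mk.inj_iff.1 hjk))
      simp only [Fintype.card_fin] at this
      omega
    · refine add_le_add ?_ ?_
      · simpa using Finset.card_filter_le Finset.univ fun j => r ≤ (v j : ℕ)
      · simpa using Finset.card_filter_le Finset.univ fun j => r ≤ (w j : ℕ)

variable {mf : ∀ p q : ℕ, Lam K n p ⊗[K] Lam K n q →ₗ[K] Lam K n (p+q)}
variable {Df : ∀ p q : ℕ, Lam K n (p+q) →ₗ[K] Lam K n p ⊗[K] Lam K n q}

theorem basisWedge_castLE_notMem_schurRel (hmf : ∀ p q, IsMulMap K n p q (mf p q))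
    (hDf : ∀ p q, IsComulMap K n p q (Df p q)) {p q : ℕ} (hq : q ≤ p) (hp : p ≤ n) :
    basisWedge K (Fin.castLE hp) ⊗ₜ[K] basisWedge K (Fin.castLE (hq.trans hp)) ∉
      schurRel K n mf Df p q := by
  rw [mem_schurRel_iff hmf hDf hq]
  rintro ⟨y, hy, h⟩
  have h0 : raise K n y = 0 := by
    cases q with
    | zero => exact raise_eq_zero hy
    | succ q =>
      refine eq_zero_of_lower_eq_zero (by omega) (raise_mem hy) ?_
      rw [h]
      exact raise_basisWedge_castLE hq hp
  rw [h0, map_zero] at h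
  exact tmul_ne_zero (basisWedge_castLE_ne_zero hp) (basisWedge_castLE_ne_zero (hq.trans hp))
    (incl_injective p q (h.symm.trans (map_zero _).symm))

theorem not_range_aeval_torusPoly_le (hmf : ∀ p q, IsMulMap K n p q (mf p q))
    (hDf : ∀ p q, IsComulMap K n p q (Df p q)) (hrho : IsExtAction K n rho) {p q : ℕ}
    (hq : q ≤ p) (hp : p ≤ n) :
    ¬ LinearMap.range (aeval (R := K) (rhoT K n rho p q (torusElt K n p)) (torusPoly K (p + q))) ≤
      schurRel K n mf Df p q := by
  intro h
  have h1 := h ⟨basisWedge K (Fin.castLE hp) ⊗ₜ[K] basisWedge K (Fin.castLE (hq.trans hp)), rfl⟩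
  rw [aeval_apply_of_eq_smul (rhoT_torusElt hrho p _ _)] at h1
  refine basisWedge_castLE_notMem_schurRel hmf hDf hq hp ((Submodule.smul_mem_iff _ ?_).1 h1)
  have e : ∀ {m : ℕ} (hm : m ≤ n), m ≤ p →
      (Finset.univ.filter fun j : Fin m => p ≤ (Fin.castLE hm j : ℕ)).card = 0 := by
    intro m hm hmp
    rw [Finset.card_eq_zero, Finset.filter_eq_empty_iff]
    intro j _
    simp only [Fin.val_castLE]
    omega
  rw [e hp le_rfl, e _ hq, torusPoly, eval_prod, Finset.prod_ne_zero_iff]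
  intro s hs
  rw [eval_sub, eval_X, eval_C, sub_ne_zero]
  have h2 : (2 : ℕ) ^ s ≠ 1 := by
    have := Nat.one_lt_two_pow (n := s) (by have := (Finset.mem_Icc.1 hs).1; omega)
    omega
  rw [add_zero, pow_zero]
  exact_mod_cast h2.symm

end Torus

end MMS

namespace MMS

open Polynomial

section Classification

variable {K : Type} [Field K] [CharZero K] {n : ℕ}
variable {mf : ∀ p q : ℕ, Lam K n p ⊗[K] Lam K n q →ₗ[K] Lam K n (p+q)}
variable {Df : ∀ p q : ℕ, Lam K n (p+q) →ₗ[K] Lam K n p ⊗[K] Lam K n q}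
variable {rho : ∀ p : ℕ, GLn K n → (Lam K n p →ₗ[K] Lam K n p)}

theorem not_range_aeval_torusPoly_le_range_sub_eig (hmf : ∀ p q, IsMulMap K n p q (mf p q))
    (hDf : ∀ p q, IsComulMap K n p q (Df p q)) (hrho : IsExtAction K n rho)
    {a b j : ℕ} (hba : b ≤ a) (hn : a + b ≤ n) (hj : j ≤ b) :
    ¬ LinearMap.range
        (aeval (R := K) (rhoT K n rho a b (torusElt K n (a + j))) (torusPoly K (a + b))) ≤
      LinearMap.range (aeval (R := K) (PhiMap' K n mf Df a b 1) (X - C (eig K a b j))) := by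
  intro h
  have h1 := (isQuotIso_range_sub_eig hmf hDf hrho hba hj).range_aeval_le _ _ h
  have e : a + b = a + j + (b - j) := by omega
  rw [e] at h1
  exact not_range_aeval_torusPoly_le hmf hDf hrho (by omega) (by omega) h1

theorem range_aeval_torusPoly_le_range_sub_eig (hmf : ∀ p q, IsMulMap K n p q (mf p q))
    (hDf : ∀ p q, IsComulMap K n p q (Df p q)) (hrho : IsExtAction K n rho)
    {a b j r : ℕ} (hba : b ≤ a) (hj : j ≤ b) (hr : r < a + j) :
    LinearMap.range
        (aeval (R := K) (rhoT K n rho a b (torusElt K n r)) (torusPoly K (a + b))) ≤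
      LinearMap.range (aeval (R := K) (PhiMap' K n mf Df a b 1) (X - C (eig K a b j))) := by
  refine (isQuotIso_range_sub_eig hmf hDf hrho hba hj).symm.range_aeval_le _ _ ?_
  have e : a + b = a + j + (b - j) := by omega
  rw [e, aeval_torusPoly_eq_zero hrho hr, LinearMap.range_zero]
  exact bot_le

theorem aeval_PhiMap'_one_prod_eig_aeval_torusPoly (hmf : ∀ p q, IsMulMap K n p q (mf p q))
    (hDf : ∀ p q, IsComulMap K n p q (Df p q)) (hrho : IsExtAction K n rho)
    {a b i : ℕ} (hba : b ≤ a) (hi : i ≤ b) (x : Lam K n a ⊗[K] Lam K n b) :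
    aeval (R := K) (PhiMap' K n mf Df a b 1)
      (∏ k ∈ Finset.range (i + 1), (X - C (eig K a b k)))
      (aeval (R := K) (rhoT K n rho a b (torusElt K n (a + i))) (torusPoly K (a + b)) x) = 0 := by
  rcases hi.eq_or_lt with rfl | hi
  · rw [aeval_PhiMap'_one_prod_eig hmf hDf hba, LinearMap.zero_apply]
  · have e : a + b = a + (i + 1) + (b - (i + 1)) := by omega
    rw [aeval_PhiMap'_one_prod_eig_eq_smul hmf hDf hba hi, LinearMap.smul_apply, PhiMap',
      dif_pos ⟨hi.trans_le hba, hi⟩, PhiMap, LinearMap.comp_apply, LinearMap.comp_apply,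
      map_aeval_apply (fun y => (rhoT_deltaMap hmf hDf hrho hi (torusElt K n (a + i)) y).symm), e,
      aeval_torusPoly_eq_zero hrho (by omega), LinearMap.zero_apply, map_zero, map_zero, smul_zero]

theorem isQuotIso_range_phiPoly_iff (hmf : ∀ p q, IsMulMap K n p q (mf p q))
    (hDf : ∀ p q, IsComulMap K n p q (Df p q)) (hrho : IsExtAction K n rho)
    {a b i : ℕ} (hba : b ≤ a) (hn : a + b ≤ n) (hi : i ≤ b) (p : K[X]) :
    IsQuotIso K (LinearMap.range (aeval (R := K) (PhiMap' K n mf Df a b 1) p))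
        (schurRel K n mf Df (a + i) (b - i)) (rhoT K n rho a b) (rhoT K n rho (a + i) (b - i)) ↔
      p.eval (eig K a b i) = 0 ∧ ∀ j ≤ b, j ≠ i → p.eval (eig K a b j) ≠ 0 := by
  have hI := isQuotIso_range_sub_eig hmf hDf hrho hba hi
  constructor
  · intro h
    have hle : ∀ j, p.eval (eig K a b j) = 0 →
        LinearMap.range (aeval (R := K) (PhiMap' K n mf Df a b 1) p) ≤
          LinearMap.range (aeval (R := K) (PhiMap' K n mf Df a b 1) (X - C (eig K a b j))) :=
      fun j hj => range_aeval_le_of_dvd _ (dvd_iff_isRoot.2 hj)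
    have hlt : ∀ j < i, p.eval (eig K a b j) ≠ 0 := fun j hj h0 =>
      not_range_aeval_torusPoly_le_range_sub_eig hmf hDf hrho hba hn (hj.le.trans hi)
        ((h.symm.range_aeval_le _ _ (hI.range_aeval_le _ _
          (range_aeval_torusPoly_le_range_sub_eig hmf hDf hrho hba hi (by omega)))).trans
          (hle j h0))
    have h0 : p.eval (eig K a b i) = 0 := by
      by_contra h0
      refine not_range_aeval_torusPoly_le_range_sub_eig hmf hDf hrho hba hn hi
        (hI.symm.range_aeval_le _ _ (h.range_aeval_le _ _ ?_))
      rintro _ ⟨x, rfl⟩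
      refine ker_aeval_le_range_aeval _ (IsCoprime.prod_left fun k hk =>
        (isCoprime_X_sub_C_of_eval_ne_zero ?_).symm) (LinearMap.mem_ker.2
          (aeval_PhiMap'_one_prod_eig_aeval_torusPoly hmf hDf hrho hba hi x))
      rcases (Nat.lt_succ_iff.1 (Finset.mem_range.1 hk)).eq_or_lt with rfl | hk
      · exact h0
      · exact hlt k hk
    refine ⟨h0, fun j hj hji hj0 => ?_⟩
    have heq := Submodule.eq_of_le_of_finrank_eq (hle i h0) (by
      have h1 := Submodule.finrank_quotient_add_finrank
        (LinearMap.range (aeval (R := K) (PhiMap' K n mf Df a b 1) p))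
      have h2 := Submodule.finrank_quotient_add_finrank
        (LinearMap.range (aeval (R := K) (PhiMap' K n mf Df a b 1) (X - C (eig K a b i))))
      have h3 := h.finrank_eq
      have h4 := hI.finrank_eq
      omega)
    have hsup := range_aeval_sup_range_aeval (PhiMap' K n mf Df a b 1)
      (isCoprime_X_sub_C_of_eval_ne_zero (p := X - C (eig K a b i)) (c := eig K a b j) (by
        rw [eval_sub, eval_X, eval_C, sub_ne_zero]
        exact (eig_injective hba).ne hji))
    rw [← heq, sup_eq_right.2 (hle j hj0)] at hsup
    exact not_range_aeval_torusPoly_le_range_sub_eig hmf hDf hrho hba hn hj (hsup ▸ le_top)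
  · rintro ⟨h0, h⟩
    rwa [range_aeval_eq_of_isRoot (PhiMap' K n mf Df a b 1) (Finset.range (b + 1)) (eig K a b)
      (aeval_PhiMap'_one_prod_eig hmf hDf hba) (Finset.mem_range.2 (by omega)) h0
      fun j hj => h j (Nat.lt_succ_iff.1 (Finset.mem_range.1 hj))]

end Classification

end MMS

namespace MMS

/-- Theorem 3.4 of the paper: for `a ≥ b`, `n ≥ a+b`, `Φ = Σ_{t=0}^{b} a_t Φ_t` and
`0 ≤ i ≤ b`, `coker Φ ≅ L_{(a+i,b−i)}` as `G`-modules iff `Σ_{t=0}^{i} a_t c_t(a,b,i) = 0`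
and `Σ_{t=0}^{j} a_t c_t(a,b,j) ≠ 0` for all `j ∈ {0,…,b} \ {i}`. -/
theorem statement0 (K : Type) [Field K] [CharZero K] (n : ℕ) (hn1 : 1 ≤ n)
    (a b : ℕ) (hba : b ≤ a) (hn : a + b ≤ n)
    (mf : ∀ p q : ℕ, Lam K n p ⊗[K] Lam K n q →ₗ[K] Lam K n (p+q))
    (Df : ∀ p q : ℕ, Lam K n (p+q) →ₗ[K] Lam K n p ⊗[K] Lam K n q)
    (hmf : ∀ p q, IsMulMap K n p q (mf p q))
    (hDf : ∀ p q, IsComulMap K n p q (Df p q))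
    (rho : ∀ p : ℕ, GLn K n → (Lam K n p →ₗ[K] Lam K n p))
    (hrho : IsExtAction K n rho)
    (coef : ℕ → K) (i : ℕ) (hi : i ≤ b) :
    IsQuotIso K
        (LinearMap.range (∑ t ∈ Finset.range (b+1), coef t • PhiMap' K n mf Df a b t))
        (schurRel K n mf Df (a+i) (b-i))
        (rhoT K n rho a b) (rhoT K n rho (a+i) (b-i)) ↔
      ((∑ t ∈ Finset.range (i+1), coef t * (cCoef a b t i : K)) = 0 ∧
        ∀ j : ℕ, j ≤ b → j ≠ i →
          (∑ t ∈ Finset.range (j+1), coef t * (cCoef a b t j : K)) ≠ 0) := by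
  rw [← aeval_phiPoly hmf hDf hba, isQuotIso_range_phiPoly_iff hmf hDf hrho hba hn hi,
    eval_phiPoly hba hi]
  exact and_congr_right fun _ => forall₂_congr fun j hj => by rw [eval_phiPoly hba hj]

end MMS
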